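/- arXiv:2012.00844 — 9 statements merged into one kernel-verified Lean document; each statement's English description precedes it below -/
import Mathlib

section
/- The map L ↦ V[[z]] ∩ z·L is a bijection from the set of opposite filtrations of V((z)) onto the set of sections of V[[z]], with inverse B ↦ z⁻¹B[z⁻¹]. In particular: (a) for every opposite filtration L, the subspace V[[z]] ∩ z·L is a section; (b) for every section B, the subspace z⁻¹B[z⁻¹] is an opposite filtration; (c) z⁻¹(V[[z]] ∩ z·L)[z⁻¹] = L for every opposite filtration L; (d) V[[z]] ∩ z·(z⁻¹B[z⁻¹]) = B for every section B. -/
/-!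
Setting: `V` a finite-dimensional complex vector space.  We model the space of
formal Laurent series `V((z))` (finitely many negative powers) as
`HahnModule ℤ ℂ V`, which is a module over `ℂ((z)) = LaurentSeries ℂ` and over `ℂ`.
`V[[z]]` is the ℂ-subspace of series with no negative-power coefficients.
-/

open HahnModule

noncomputable section

variable (V : Type*) [AddCommGroup V] [Module ℂ V]

/-- Multiplication by the scalar `c ∈ ℂ` commutes with multiplication by Laurent series. -/
instance hmSMulCommClass : SMulCommClass ℂ (LaurentSeries ℂ) (HahnModule ℤ ℂ V) where
  smul_comm c P m := by
    have hcs : ∀ x : HahnModule ℤ ℂ V, (of ℂ).symm (c • x) = c • (of ℂ).symm x := fun _ => rfl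
    have hsub : ((of ℂ).symm (c • m)).support ⊆ ((of ℂ).symm m).support := by
      intro j hj
      rw [HahnSeries.mem_support] at hj ⊢
      rw [hcs, HahnSeries.coeff_smul] at hj
      intro h
      rw [h, smul_zero] at hj
      exact hj rfl
    apply (of ℂ).symm.injective
    ext a
    rw [hcs, HahnSeries.coeff_smul, HahnModule.coeff_smul,
      HahnModule.coeff_smul_right ((of ℂ).symm m).isPWO_support hsub, Finset.smul_sum]
    exact Finset.sum_congr rfl fun ij _ => by rw [hcs, HahnSeries.coeff_smul, smul_comm]

/-- Multiplication by `z^k` (`k ∈ ℤ`) as a `ℂ`-linear endomorphism of `V((z))`. -/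
def zpowMul (k : ℤ) : HahnModule ℤ ℂ V →ₗ[ℂ] HahnModule ℤ ℂ V where
  toFun m := (HahnSeries.single k (1 : ℂ) : LaurentSeries ℂ) • m
  map_add' x y := _root_.smul_add _ x y
  map_smul' c m := (smul_comm c _ m).symm

/-- `V[[z]] ⊆ V((z))`: the ℂ-subspace of series with vanishing coefficients in
negative degrees. -/
def posPart : Submodule ℂ (HahnModule ℤ ℂ V) where
  carrier := {f | ∀ n : ℤ, n < 0 → ((of ℂ).symm f).coeff n = 0}
  zero_mem' := fun n _ => rfl
  add_mem' := by
    intro a b ha hb n hn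
    rw [of_symm_add, HahnSeries.coeff_add, ha n hn, hb n hn, add_zero]
  smul_mem' := by
    intro c f hf n hn
    have : (of ℂ).symm (c • f) = c • (of ℂ).symm f := rfl
    rw [this, HahnSeries.coeff_smul, hf n hn, smul_zero]

/-- The constant-term map `V((z)) → V`, `f ↦ f(0)` (the coefficient of `z⁰`). -/
def constTerm : HahnModule ℤ ℂ V →ₗ[ℂ] V where
  toFun f := ((of ℂ).symm f).coeff 0
  map_add' x y := by
    show ((of ℂ).symm (x + y)).coeff 0 = ((of ℂ).symm x).coeff 0 + ((of ℂ).symm y).coeff 0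
    rw [of_symm_add, HahnSeries.coeff_add]
  map_smul' c f := by
    show ((of ℂ).symm (c • f)).coeff 0 = c • ((of ℂ).symm f).coeff 0
    have : (of ℂ).symm (c • f) = c • (of ℂ).symm f := rfl
    rw [this, HahnSeries.coeff_smul]

variable {V}

/-- A *section* of `V[[z]]`: a ℂ-subspace `B ⊆ V[[z]]` such that the constant-term
map `B → V` is a ℂ-linear isomorphism (i.e. bijective). -/
def IsSection (B : Submodule ℂ (HahnModule ℤ ℂ V)) : Prop :=
  B ≤ posPart V ∧ Function.Bijective ⇑((constTerm V).comp B.subtype)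

/-- An *opposite filtration* of `V((z))`: a ℂ-subspace `L` with
`V((z)) = V[[z]] ⊕ L` and `L ⊆ z·L`. -/
def IsOppositeFiltration (L : Submodule ℂ (HahnModule ℤ ℂ V)) : Prop :=
  IsCompl (posPart V) L ∧ L ≤ L.map (zpowMul V 1)

/-- The section `V[[z]] ∩ z·L` attached to an opposite filtration `L`. -/
def sectionOf (L : Submodule ℂ (HahnModule ℤ ℂ V)) : Submodule ℂ (HahnModule ℤ ℂ V) :=
  posPart V ⊓ L.map (zpowMul V 1)

/-- The opposite filtration `z⁻¹B[z⁻¹]`, the ℂ-linear span of `{z⁻ʲ·b : j ≥ 1, b ∈ B}`,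
attached to a section `B`. -/
def oppositeOf (B : Submodule ℂ (HahnModule ℤ ℂ V)) : Submodule ℂ (HahnModule ℤ ℂ V) :=
  Submodule.span ℂ {x | ∃ j : ℕ, 1 ≤ j ∧ ∃ b ∈ B, x = zpowMul V (-(j : ℤ)) b}

/-- Coefficient of a Laurent series. -/
def cf (f : HahnModule ℤ ℂ V) (n : ℤ) : V := ((of ℂ).symm f).coeff n

theorem cf_ext {f g : HahnModule ℤ ℂ V} (h : ∀ n, cf f n = cf g n) : f = g := by
  apply (of ℂ).symm.injective
  ext n
  exact h n

theorem cf_add (f g : HahnModule ℤ ℂ V) (n : ℤ) : cf (f + g) n = cf f n + cf g n := by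
  unfold cf
  rw [of_symm_add, HahnSeries.coeff_add]

theorem cf_sub (f g : HahnModule ℤ ℂ V) (n : ℤ) : cf (f - g) n = cf f n - cf g n := by
  have h := cf_add (f - g) g n
  rw [sub_add_cancel] at h
  rw [h, add_sub_cancel_right]

theorem cf_zero (n : ℤ) : cf (0 : HahnModule ℤ ℂ V) n = 0 := rfl

theorem cf_zpow (k : ℤ) (f : HahnModule ℤ ℂ V) (n : ℤ) :
    cf (zpowMul V k f) n = cf f (n - k) := by
  have h := HahnModule.coeff_single_smul_vadd (r := (1 : ℂ)) (x := f) (a := n - k) (b := k)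
  rw [one_smul, vadd_eq_add, add_sub_cancel] at h
  exact h

theorem zpow_zpow (k l : ℤ) (f : HahnModule ℤ ℂ V) :
    zpowMul V k (zpowMul V l f) = zpowMul V (k + l) f := by
  apply cf_ext
  intro n
  rw [cf_zpow, cf_zpow, cf_zpow, sub_sub]

theorem zpow_zero' (f : HahnModule ℤ ℂ V) : zpowMul V 0 f = f := by
  apply cf_ext
  intro n
  rw [cf_zpow, sub_zero]

theorem mem_pos {f : HahnModule ℤ ℂ V} : f ∈ posPart V ↔ ∀ n : ℤ, n < 0 → cf f n = 0 := Iff.rfl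

theorem constTerm_eq (f : HahnModule ℤ ℂ V) : constTerm V f = cf f 0 := rfl

theorem exists_bound (f : HahnModule ℤ ℂ V) : ∃ N : ℕ, ∀ n : ℤ, n < -(N : ℤ) → cf f n = 0 := by
  refine ⟨(-((of ℂ).symm f).order).toNat, fun n hn => ?_⟩
  apply HahnSeries.coeff_eq_zero_of_lt_order
  omega

theorem mem_opp {B : Submodule ℂ (HahnModule ℤ ℂ V)} {b : HahnModule ℤ ℂ V} (hb : b ∈ B)
    (j : ℕ) (hj : 1 ≤ j) : zpowMul V (-(j : ℤ)) b ∈ oppositeOf B :=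
  Submodule.subset_span ⟨j, hj, b, hb, rfl⟩

theorem approx {B : Submodule ℂ (HahnModule ℤ ℂ V)} (hB : IsSection B) (N : ℕ) :
    ∀ f : HahnModule ℤ ℂ V, (∀ n : ℤ, n < -(N : ℤ) → cf f n = 0) →
      ∃ y ∈ oppositeOf B, f - y ∈ posPart V := by
  induction N with
  | zero =>
    intro f hf
    refine ⟨0, Submodule.zero_mem _, ?_⟩
    rw [sub_zero]
    intro n hn
    exact hf n (by simpa using hn)
  | succ N ih =>
    intro f hf
    obtain ⟨⟨b, hb⟩, hbv⟩ := hB.2.2 (cf f (-((N + 1 : ℕ) : ℤ)))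
    have hbv' : cf b 0 = cf f (-((N + 1 : ℕ) : ℤ)) := hbv
    obtain ⟨y, hy, hfy⟩ := ih (f - zpowMul V (-((N + 1 : ℕ) : ℤ)) b) (by
      intro n hn
      rw [cf_sub, cf_zpow]
      by_cases h : n = -((N + 1 : ℕ) : ℤ)
      · rw [h, sub_self, hbv', sub_self]
      · have h1 : n < -((N + 1 : ℕ) : ℤ) := by
          push_cast at *
          omega
        rw [hf n h1, mem_pos.1 (hB.1 hb) _ (by omega), sub_zero])
    refine ⟨zpowMul V (-((N + 1 : ℕ) : ℤ)) b + y,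
      Submodule.add_mem _ (mem_opp hb _ (by omega)) hy, ?_⟩
    rw [← sub_sub]
    exact hfy

theorem approx' {B : Submodule ℂ (HahnModule ℤ ℂ V)} (hB : IsSection B)
    (f : HahnModule ℤ ℂ V) : ∃ y ∈ oppositeOf B, f - y ∈ posPart V := by
  obtain ⟨N, hN⟩ := exists_bound f
  exact approx hB N f hN

/-- Truncated version of `oppositeOf`. -/
def trunc (B : Submodule ℂ (HahnModule ℤ ℂ V)) : ℕ → Submodule ℂ (HahnModule ℤ ℂ V)
  | 0 => ⊥
  | n + 1 => B.map (zpowMul V (-((n + 1 : ℕ) : ℤ))) ⊔ trunc B n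

theorem trunc_mono (B : Submodule ℂ (HahnModule ℤ ℂ V)) : Monotone (trunc B) :=
  monotone_nat_of_le_succ fun _ => le_sup_right

theorem opp_le_trunc (B : Submodule ℂ (HahnModule ℤ ℂ V)) :
    oppositeOf B ≤ ⨆ n, trunc B n := by
  refine Submodule.span_le.2 ?_
  rintro x ⟨j, hj, b, hb, rfl⟩
  obtain ⟨n, rfl⟩ : ∃ n, j = n + 1 := ⟨j - 1, by omega⟩
  exact Submodule.mem_iSup_of_mem (n + 1) (Submodule.mem_sup_left ⟨b, hb, rfl⟩)

theorem trunc_cf {B : Submodule ℂ (HahnModule ℤ ℂ V)} (hB : IsSection B) (N : ℕ) :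
    ∀ x ∈ trunc B N, ∀ n : ℤ, n < -(N : ℤ) → cf x n = 0 := by
  induction N with
  | zero =>
    intro x hx n _
    rw [(Submodule.mem_bot ℂ).1 hx, cf_zero]
  | succ N ih =>
    intro x hx n hn
    obtain ⟨_, ⟨b, hb, rfl⟩, y, hy, rfl⟩ := Submodule.mem_sup.1 hx
    rw [cf_add, cf_zpow, ih y hy n (by push_cast at hn; omega),
      mem_pos.1 (hB.1 hb) _ (by omega), add_zero]

theorem sec_inj {B : Submodule ℂ (HahnModule ℤ ℂ V)} (hB : IsSection B)
    {b c : HahnModule ℤ ℂ V} (hb : b ∈ B) (hc : c ∈ B) (h : cf b 0 = cf c 0) : b = c :=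
  congrArg Subtype.val (@hB.2.1 ⟨b, hb⟩ ⟨c, hc⟩ h)

theorem trunc_pos {B : Submodule ℂ (HahnModule ℤ ℂ V)} (hB : IsSection B) (N : ℕ) :
    ∀ x ∈ trunc B N, x ∈ posPart V → x = 0 := by
  induction N with
  | zero =>
    intro x hx _
    exact (Submodule.mem_bot ℂ).1 hx
  | succ N ih =>
    intro x hx hp
    obtain ⟨_, ⟨b, hb, rfl⟩, y, hy, rfl⟩ := Submodule.mem_sup.1 hx
    have h := mem_pos.1 hp (-((N + 1 : ℕ) : ℤ)) (by omega)
    rw [cf_add, cf_zpow, sub_self, trunc_cf hB N y hy _ (by omega), add_zero] at h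
    have hb0 : b = 0 := sec_inj hB hb (Submodule.zero_mem _) h
    subst hb0
    rw [map_zero, zero_add] at hp ⊢
    exact ih y hy hp

theorem opp_pos {B : Submodule ℂ (HahnModule ℤ ℂ V)} (hB : IsSection B)
    {x : HahnModule ℤ ℂ V} (hx : x ∈ oppositeOf B) (hp : x ∈ posPart V) : x = 0 := by
  obtain ⟨N, hN⟩ := (Submodule.mem_iSup_of_directed _ (trunc_mono B).directed_le).1
    (opp_le_trunc B hx)
  exact trunc_pos hB N x hN hp

theorem opp_shift (B : Submodule ℂ (HahnModule ℤ ℂ V)) :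
    oppositeOf B ≤ (oppositeOf B).map (zpowMul V 1) := by
  refine Submodule.span_le.2 ?_
  rintro x ⟨j, hj, b, hb, rfl⟩
  refine ⟨_, mem_opp hb (j + 1) (by omega), ?_⟩
  rw [zpow_zpow]
  congr 1
  push_cast
  ring_nf

theorem part_b {B : Submodule ℂ (HahnModule ℤ ℂ V)} (hB : IsSection B) :
    IsOppositeFiltration (oppositeOf B) := by
  refine ⟨⟨?_, ?_⟩, opp_shift B⟩
  · rw [Submodule.disjoint_def]
    intro x hp hx
    exact opp_pos hB hx hp
  · rw [codisjoint_iff, eq_top_iff]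
    intro f _
    obtain ⟨y, hy, hfy⟩ := approx' hB f
    exact Submodule.mem_sup.2 ⟨_, hfy, y, hy, sub_add_cancel f y⟩

theorem part_a {L : Submodule ℂ (HahnModule ℤ ℂ V)} (hL : IsOppositeFiltration L) :
    IsSection (sectionOf L) := by
  refine ⟨inf_le_left, ?_, ?_⟩
  · rw [injective_iff_map_eq_zero]
    rintro ⟨b, hb, l, hl, rfl⟩ h
    have h0 : cf (zpowMul V 1 l) 0 = 0 := h
    have hl0 : l = 0 := by
      refine (Submodule.disjoint_def.1 hL.1.disjoint) l ?_ hl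
      intro n hn
      have e : cf (zpowMul V 1 l) (n + 1) = cf l n := by rw [cf_zpow, add_sub_cancel_right]
      change cf l n = 0
      rw [← e]
      by_cases hn1 : n + 1 = 0
      · rw [hn1, h0]
      · exact mem_pos.1 hb _ (by omega)
    apply Subtype.ext
    change zpowMul V 1 l = 0
    rw [hl0, map_zero]
  · intro v
    have ht : zpowMul V (-1) (of ℂ (HahnSeries.single 0 v)) ∈ posPart V ⊔ L := by
      rw [hL.1.sup_eq_top]
      trivial
    obtain ⟨p, hp, l, hl, hpl⟩ := Submodule.mem_sup.1 ht
    have key : ∀ n, cf (zpowMul V 1 l) n = (HahnSeries.single (0 : ℤ) v).coeff n - cf p (n - 1) := by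
      intro n
      have h1 := congrArg (fun g => cf g (n - 1)) hpl
      simp only [cf_add, cf_zpow] at h1
      rw [cf_zpow, eq_sub_iff_add_eq, add_comm, h1, sub_neg_eq_add, sub_add_cancel]
      rfl
    refine ⟨⟨zpowMul V 1 l, ?_, l, hl, rfl⟩, ?_⟩
    · intro n hn
      change cf (zpowMul V 1 l) n = 0
      rw [key, mem_pos.1 hp _ (by omega), HahnSeries.coeff_single_of_ne hn.ne, sub_zero]
    · change cf (zpowMul V 1 l) 0 = v
      rw [key, mem_pos.1 hp _ (by omega), HahnSeries.coeff_single_same, sub_zero]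

theorem shift_mem {L : Submodule ℂ (HahnModule ℤ ℂ V)} (hL : L ≤ L.map (zpowMul V 1))
    {x : HahnModule ℤ ℂ V} (j : ℕ) (hx : x ∈ L) : zpowMul V (-(j : ℤ)) x ∈ L := by
  induction j with
  | zero => simpa [zpow_zero'] using hx
  | succ j ih =>
    obtain ⟨y, hy, hyx⟩ := hL ih
    have : zpowMul V (-((j + 1 : ℕ) : ℤ)) x = y := by
      have h := congrArg (zpowMul V (-1)) hyx
      rw [zpow_zpow, zpow_zpow, neg_add_cancel, zpow_zero'] at h
      rw [h]
      congr 1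
      push_cast
      ring_nf
    rw [this]
    exact hy

theorem part_c {L : Submodule ℂ (HahnModule ℤ ℂ V)} (hL : IsOppositeFiltration L) :
    oppositeOf (sectionOf L) = L := by
  have hle : oppositeOf (sectionOf L) ≤ L := by
    refine Submodule.span_le.2 ?_
    rintro x ⟨j, hj, b, ⟨_, l, hl, rfl⟩, rfl⟩
    obtain ⟨n, rfl⟩ : ∃ n, j = n + 1 := ⟨j - 1, by omega⟩
    rw [zpow_zpow]
    have : -((n + 1 : ℕ) : ℤ) + 1 = -(n : ℤ) := by push_cast; ring
    rw [this]
    exact shift_mem hL.2 n hl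
  refine le_antisymm hle ?_
  intro l hl
  obtain ⟨y, hy, hly⟩ := approx' (part_a hL) l
  have := Submodule.disjoint_def.1 hL.1.disjoint _ hly (Submodule.sub_mem _ hl (hle hy))
  rw [sub_eq_zero.1 this]
  exact hy

theorem part_d {B : Submodule ℂ (HahnModule ℤ ℂ V)} (hB : IsSection B) :
    sectionOf (oppositeOf B) = B := by
  have hle : B ≤ sectionOf (oppositeOf B) := by
    intro b hb
    refine ⟨hB.1 hb, _, mem_opp hb 1 le_rfl, ?_⟩
    rw [zpow_zpow]
    simpa using zpow_zero' b
  refine le_antisymm ?_ hle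
  intro x hx
  obtain ⟨⟨b, hb⟩, hbx⟩ := hB.2.2 (cf x 0)
  have := sec_inj (part_a (part_b hB)) (hle hb) hx hbx
  rw [← this]
  exact hb

/-- `L ↦ V[[z]] ∩ z·L` is a bijection from opposite filtrations of
`V((z))` onto sections of `V[[z]]`, with inverse `B ↦ z⁻¹B[z⁻¹]`:
(a) `V[[z]] ∩ z·L` is a section; (b) `z⁻¹B[z⁻¹]` is an opposite filtration;
(c) `z⁻¹(V[[z]] ∩ z·L)[z⁻¹] = L`; (d) `V[[z]] ∩ z·(z⁻¹B[z⁻¹]) = B`. -/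
theorem section_opposite_bijection
    (V : Type*) [AddCommGroup V] [Module ℂ V] [FiniteDimensional ℂ V] :
    (∀ L : Submodule ℂ (HahnModule ℤ ℂ V), IsOppositeFiltration L → IsSection (sectionOf L)) ∧
    (∀ B : Submodule ℂ (HahnModule ℤ ℂ V), IsSection B → IsOppositeFiltration (oppositeOf B)) ∧
    (∀ L : Submodule ℂ (HahnModule ℤ ℂ V), IsOppositeFiltration L →
      oppositeOf (sectionOf L) = L) ∧
    (∀ B : Submodule ℂ (HahnModule ℤ ℂ V), IsSection B →
      sectionOf (oppositeOf B) = B) := by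
  exact ⟨fun _ h => part_a h, fun _ h => part_b h, fun _ h => part_c h, fun _ h => part_d h⟩

end
end

section
/- The following three conditions are equivalent: (a) ∇(B) ⊆ B + z⁻¹B; (a′) ∇(B) ⊆ B[z⁻¹], the span of {z⁻ʲ·b : j ≥ 0, b ∈ B}; (b) ∇(L) ⊆ L. -/
/-!
Setting: `V` a finite-dimensional complex vector space.  We model the space of
formal Laurent series `V((z))` (finitely many negative powers) as
`HahnModule ℤ ℂ V`, which is a module over `ℂ((z)) = LaurentSeries ℂ` and over `ℂ`.
`V[[z]]` is the ℂ-subspace of series with no negative-power coefficients.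
-/

open HahnModule

noncomputable section

variable (V : Type*) [AddCommGroup V] [Module ℂ V]

variable {V}

/-- The derivation `z·d/dz` acting coefficientwise on `ℂ((z))`:
`zⁿ ↦ n·zⁿ`. -/
def zDz (P : LaurentSeries ℂ) : LaurentSeries ℂ where
  coeff n := (n : ℤ) • P.coeff n
  isPWO_support' := P.isPWO_support.mono (by
    intro n hn
    rw [Function.mem_support] at hn
    rw [HahnSeries.mem_support]
    intro h
    rw [h, smul_zero] at hn
    exact hn rfl)

theorem aux_zz {V : Type*} [AddCommGroup V] [Module ℂ V] (a b : ℤ) (m : HahnModule ℤ ℂ V) :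
    zpowMul V a (zpowMul V b m) = zpowMul V (a + b) m := by
  show (HahnSeries.single a (1 : ℂ) : LaurentSeries ℂ) •
    ((HahnSeries.single b (1 : ℂ) : LaurentSeries ℂ) • m) =
    (HahnSeries.single (a + b) (1 : ℂ) : LaurentSeries ℂ) • m
  refine (mul_smul (HahnSeries.single a (1 : ℂ) : LaurentSeries ℂ)
    (HahnSeries.single b (1 : ℂ) : LaurentSeries ℂ) m).symm.trans ?_
  rw [HahnSeries.single_mul_single, one_mul]

theorem aux_z0 {V : Type*} [AddCommGroup V] [Module ℂ V] (m : HahnModule ℤ ℂ V) :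
    zpowMul V 0 m = m := by
  show (HahnSeries.single 0 (1 : ℂ) : LaurentSeries ℂ) • m = m
  exact one_smul _ m

theorem aux_coeff {V : Type*} [AddCommGroup V] [Module ℂ V] (k n : ℤ) (m : HahnModule ℤ ℂ V) :
    ((of ℂ).symm (zpowMul V k m)).coeff n = ((of ℂ).symm m).coeff (n - k) := by
  show ((of ℂ).symm ((HahnSeries.single k (1 : ℂ) : LaurentSeries ℂ) • m)).coeff n = _
  have h := HahnModule.coeff_single_smul_vadd (r := (1 : ℂ)) (x := m) (a := n - k) (b := k)
  rw [one_smul] at h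
  rw [← h]
  simp

theorem aux_exists {V : Type*} [AddCommGroup V] [Module ℂ V] (m : HahnModule ℤ ℂ V) :
    ∃ n : ℕ, zpowMul V n m ∈ posPart V := by
  obtain ⟨c, hc⟩ : BddBelow ((of ℂ).symm m).support := by
    by_cases h : ((of ℂ).symm m).support.Nonempty
    · exact ⟨((of ℂ).symm m).isWF_support.min h, fun x hx => Set.IsWF.min_le _ h hx⟩
    · rw [Set.not_nonempty_iff_eq_empty] at h
      rw [h]; exact bddBelow_empty
  refine ⟨c.natAbs, fun n hn => ?_⟩
  rw [aux_coeff]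
  by_contra h
  have := hc (HahnSeries.mem_support _ _ |>.2 h)
  omega

theorem aux_pos_mono {V : Type*} [AddCommGroup V] [Module ℂ V] (n : ℕ) (m : HahnModule ℤ ℂ V)
    (h : m ∈ posPart V) : zpowMul V n m ∈ posPart V := by
  intro k hk
  rw [aux_coeff]
  exact h _ (by omega)

theorem aux_nabla {V : Type*} [AddCommGroup V] [Module ℂ V]
    (nabla : HahnModule ℤ ℂ V →ₗ[ℂ] HahnModule ℤ ℂ V)
    (hLeib : ∀ (P : LaurentSeries ℂ) (m : HahnModule ℤ ℂ V),
      nabla (P • m) = zDz P • m + P • nabla m) (k : ℤ) (m : HahnModule ℤ ℂ V) :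
    nabla (zpowMul V k m) = k • zpowMul V k m + zpowMul V k (nabla m) := by
  have h1 : zDz (HahnSeries.single k (1 : ℂ)) = k • (HahnSeries.single k (1 : ℂ)) := by
    ext n
    show n • (HahnSeries.single k (1 : ℂ)).coeff n = _
    rw [HahnSeries.coeff_smul]
    by_cases h : n = k
    · rw [h]
    · rw [HahnSeries.coeff_single_of_ne h]; simp
  have h2 := hLeib (HahnSeries.single k (1 : ℂ)) m
  rw [h1, smul_assoc] at h2
  exact h2

theorem aux_mem_map {V : Type*} [AddCommGroup V] [Module ℂ V] (k : ℤ) (m : HahnModule ℤ ℂ V)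
    (S : Submodule ℂ (HahnModule ℤ ℂ V)) :
    m ∈ S.map (zpowMul V k) ↔ zpowMul V (-k) m ∈ S := by
  constructor
  · rintro ⟨x, hx, rfl⟩
    rw [aux_zz, neg_add_cancel, aux_z0]; exact hx
  · intro h
    exact ⟨_, h, by rw [aux_zz, add_neg_cancel, aux_z0]⟩

theorem aux_mem_sec {V : Type*} [AddCommGroup V] [Module ℂ V]
    (L : Submodule ℂ (HahnModule ℤ ℂ V)) (m : HahnModule ℤ ℂ V) :
    m ∈ sectionOf L ↔ m ∈ posPart V ∧ zpowMul V (-1) m ∈ L := by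
  rw [sectionOf, Submodule.mem_inf, aux_mem_map]

theorem aux_down {V : Type*} [AddCommGroup V] [Module ℂ V]
    (L : Submodule ℂ (HahnModule ℤ ℂ V)) (hL : IsOppositeFiltration L) (n : ℕ)
    (m : HahnModule ℤ ℂ V) (hm : m ∈ L) : zpowMul V (-(n : ℤ)) m ∈ L := by
  induction n with
  | zero => simpa [aux_z0] using hm
  | succ n ih =>
    have := (aux_mem_map _ _ _).1 (hL.2 ih)
    rw [aux_zz] at this
    convert this using 2
    push_cast; congr 1; ring

theorem aux_split {V : Type*} [AddCommGroup V] [Module ℂ V]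
    (L : Submodule ℂ (HahnModule ℤ ℂ V)) (hL : IsOppositeFiltration L)
    (x : HahnModule ℤ ℂ V) : ∃ p ∈ posPart V, ∃ l ∈ L, p + l = x := by
  have : x ∈ posPart V ⊔ L := by rw [hL.1.sup_eq_top]; trivial
  exact Submodule.mem_sup.1 this

theorem aux_gen {V : Type*} [AddCommGroup V] [Module ℂ V]
    (L : Submodule ℂ (HahnModule ℤ ℂ V)) (hL : IsOppositeFiltration L) (n : ℕ) :
    ∀ l ∈ L, zpowMul V n l ∈ posPart V → l ∈ oppositeOf (sectionOf L) := by
  induction n with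
  | zero =>
    intro l hl hp
    have hp' : l ∈ posPart V := by simpa [aux_z0] using hp
    have : l = 0 := by
      have := Submodule.mem_inf.2 ⟨hp', hl⟩
      rwa [hL.1.inf_eq_bot, Submodule.mem_bot] at this
    rw [this]; exact zero_mem _
  | succ n ih =>
    intro l hl hp
    obtain ⟨p, hpp, l', hl', h⟩ := aux_split L hL (zpowMul V n l)
    have e1 : l = zpowMul V (-(n : ℤ)) p + zpowMul V (-(n : ℤ)) l' := by
      rw [← map_add, h, aux_zz, neg_add_cancel, aux_z0]
    have hb : zpowMul V 1 l' ∈ sectionOf L := by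
      rw [aux_mem_sec, aux_zz]
      refine ⟨?_, by simpa [aux_z0] using hl'⟩
      have e2 : zpowMul V 1 l' = zpowMul V ((n + 1 : ℕ) : ℤ) l - zpowMul V 1 p := by
        rw [eq_sub_iff_add_eq', ← map_add, h, aux_zz]
        push_cast; rw [add_comm]
      rw [e2]
      exact sub_mem hp (aux_pos_mono 1 p hpp)
    have h2 : zpowMul V (-(n : ℤ)) l' ∈ oppositeOf (sectionOf L) := by
      refine Submodule.subset_span ⟨n + 1, by omega, _, hb, ?_⟩
      rw [aux_zz]; push_cast; congr 2; ring
    have h3 : zpowMul V (-(n : ℤ)) p ∈ oppositeOf (sectionOf L) := by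
      apply ih
      · rw [eq_sub_iff_add_eq.2 e1.symm]
        exact sub_mem hl (aux_down L hL n _ hl')
      · rw [aux_zz, add_neg_cancel, aux_z0]; exact hpp
    rw [e1]
    exact add_mem h3 h2

/-- For a covariant derivative `∇` in the direction `z∂z`
(a ℂ-linear endomorphism of `V((z))` satisfying the Leibniz rule
`∇(P·m) = (z dP/dz)·m + P·∇m` and `∇(V[[z]]) ⊆ z⁻¹V[[z]]`), and an opposite
filtration `L` with associated section `B = V[[z]] ∩ z·L`, the following are
equivalent: (a) `∇(B) ⊆ B + z⁻¹B`; (a′) `∇(B) ⊆ B[z⁻¹]`; (b) `∇(L) ⊆ L`. -/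
theorem zdz_stability
    (V : Type*) [AddCommGroup V] [Module ℂ V] [FiniteDimensional ℂ V]
    (nabla : HahnModule ℤ ℂ V →ₗ[ℂ] HahnModule ℤ ℂ V)
    (hLeib : ∀ (P : LaurentSeries ℂ) (m : HahnModule ℤ ℂ V),
      nabla (P • m) = zDz P • m + P • nabla m)
    (hpos : ∀ m ∈ posPart V, nabla m ∈ (posPart V).map (zpowMul V (-1)))
    (L : Submodule ℂ (HahnModule ℤ ℂ V)) (hL : IsOppositeFiltration L) :
    ((∀ b ∈ sectionOf L, nabla b ∈ sectionOf L ⊔ (sectionOf L).map (zpowMul V (-1))) ↔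
      (∀ b ∈ sectionOf L, nabla b ∈
        Submodule.span ℂ {x | ∃ j : ℕ, ∃ c ∈ sectionOf L, x = zpowMul V (-(j : ℤ)) c})) ∧
    ((∀ b ∈ sectionOf L, nabla b ∈ sectionOf L ⊔ (sectionOf L).map (zpowMul V (-1))) ↔
      (∀ l ∈ L, nabla l ∈ L)) := by
  have hab : (∀ b ∈ sectionOf L, nabla b ∈ sectionOf L ⊔ (sectionOf L).map (zpowMul V (-1))) →
      (∀ b ∈ sectionOf L, nabla b ∈
        Submodule.span ℂ {x | ∃ j : ℕ, ∃ c ∈ sectionOf L, x = zpowMul V (-(j : ℤ)) c}) := by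
    intro h b hb
    refine (sup_le ?_ ?_ : sectionOf L ⊔ (sectionOf L).map (zpowMul V (-1)) ≤ _) (h b hb)
    · intro x hx
      exact Submodule.subset_span ⟨0, x, hx, by simp [aux_z0]⟩
    · rintro _ ⟨x, hx, rfl⟩
      exact Submodule.subset_span ⟨1, x, hx, by simp⟩
  have hbc : (∀ b ∈ sectionOf L, nabla b ∈
        Submodule.span ℂ {x | ∃ j : ℕ, ∃ c ∈ sectionOf L, x = zpowMul V (-(j : ℤ)) c}) →
      (∀ l ∈ L, nabla l ∈ L) := by
    intro h
    -- z^{-(j+1)} B lies in L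
    have hB : ∀ j : ℕ, ∀ b ∈ sectionOf L, zpowMul V (-((j + 1 : ℕ) : ℤ)) b ∈ L := by
      intro j b hb
      have := aux_down L hL j _ ((aux_mem_sec L b).1 hb).2
      rw [aux_zz] at this
      have e : -((j + 1 : ℕ) : ℤ) = -(j : ℤ) + -1 := by push_cast; ring
      rw [e]; exact this
    have hle : oppositeOf (sectionOf L) ≤ L.comap nabla := by
      refine Submodule.span_le.2 ?_
      rintro _ ⟨j, hj, b, hb, rfl⟩
      obtain ⟨i, rfl⟩ := Nat.exists_eq_add_of_le' hj
      show nabla _ ∈ L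
      rw [aux_nabla nabla hLeib]
      refine add_mem (zsmul_mem (hB i b hb) _) ?_
      have hT : Submodule.span ℂ {x | ∃ j : ℕ, ∃ c ∈ sectionOf L, x = zpowMul V (-(j : ℤ)) c} ≤
          L.comap (zpowMul V (-((i + 1 : ℕ) : ℤ))) := by
        refine Submodule.span_le.2 ?_
        rintro _ ⟨k, c, hc, rfl⟩
        show zpowMul V _ _ ∈ L
        rw [aux_zz]
        have := hB (i + k) c hc
        have e : -((i + 1 : ℕ) : ℤ) + -(k : ℤ) = -((i + k + 1 : ℕ) : ℤ) := by push_cast; ring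
        rw [e]; exact this
      exact hT (h b hb)
    intro l hl
    obtain ⟨n, hn⟩ := aux_exists l
    exact hle (aux_gen L hL n l hl hn)
  have hca : (∀ l ∈ L, nabla l ∈ L) →
      (∀ b ∈ sectionOf L, nabla b ∈ sectionOf L ⊔ (sectionOf L).map (zpowMul V (-1))) := by
    intro h b hb
    obtain ⟨hb1, hb2⟩ := (aux_mem_sec L b).1 hb
    have hx1 : zpowMul V 1 (nabla b) ∈ posPart V := by
      simpa using (aux_mem_map _ _ _).1 (hpos b hb1)
    have hx2 : zpowMul V (-1) (nabla b) ∈ L := by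
      have h1 := h _ hb2
      rw [aux_nabla nabla hLeib] at h1
      exact (Submodule.add_mem_iff_right _ (zsmul_mem hb2 _)).1 h1
    obtain ⟨p, hp, l, hl, e⟩ := aux_split L hL (nabla b)
    refine Submodule.mem_sup.2 ⟨p, ?_, l, ?_, e⟩
    · refine (aux_mem_sec L p).2 ⟨hp, ?_⟩
      rw [eq_sub_of_add_eq e, map_sub]
      exact sub_mem hx2 (aux_down L hL 1 l hl)
    · rw [aux_mem_map, neg_neg, aux_mem_sec, aux_zz]
      refine ⟨?_, by simpa [aux_z0] using hl⟩
      rw [eq_sub_of_add_eq' e, map_sub]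
      exact sub_mem hx1 (aux_pos_mono 1 p hp)
  exact ⟨⟨hab, fun h => hca (hbc h)⟩, ⟨fun h => hbc (hab h), hca⟩⟩

end
end

section
/- The following two conditions are equivalent: (c) K(b, b′) ∈ ℂ·zⁿ for all b, b′ ∈ B; (d) K(l, l′) ∈ zⁿ⁻²·ℂ[z⁻¹] (the ℂ-span of zⁿ⁻²⁻ʲ for j ≥ 0) for all l, l′ ∈ L. -/
/-!
Setting: `V` a finite-dimensional complex vector space.  We model the space of
formal Laurent series `V((z))` (finitely many negative powers) as
`HahnModule ℤ ℂ V`, which is a module over `ℂ((z)) = LaurentSeries ℂ` and over `ℂ`.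
`V[[z]]` is the ℂ-subspace of series with no negative-power coefficients.
-/

open HahnModule

noncomputable section

variable (V : Type*) [AddCommGroup V] [Module ℂ V]

variable {V}

/-- The ℂ-algebra involution `σ : ℂ((z)) → ℂ((z))`, `P(z) ↦ P(−z)`,
i.e. `coeff n ↦ (−1)ⁿ · coeff n`. -/
def sigmaInv (P : LaurentSeries ℂ) : LaurentSeries ℂ where
  coeff n := ((((-1 : ℤˣ) ^ n : ℤˣ) : ℤ)) • P.coeff n
  isPWO_support' := P.isPWO_support.mono (by
    intro n hn
    rw [Function.mem_support] at hn
    rw [HahnSeries.mem_support]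
    intro h
    rw [h, smul_zero] at hn
    exact hn rfl)

theorem zpowMul_coeff (k a : ℤ) (m : HahnModule ℤ ℂ V) :
    ((of ℂ).symm (zpowMul V k m)).coeff a = ((of ℂ).symm m).coeff (a - k) := by
  have h := HahnModule.coeff_single_smul_vadd (r := (1 : ℂ)) (x := m) (a := a - k) (b := k)
  have e : k +ᵥ (a - k) = a := by rw [vadd_eq_add]; ring
  rw [e, one_smul] at h
  exact h

theorem zpowMul_zpowMul (a b : ℤ) (m : HahnModule ℤ ℂ V) :
    zpowMul V a (zpowMul V b m) = zpowMul V (a + b) m := by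
  apply (of ℂ).symm.injective
  ext c
  rw [zpowMul_coeff, zpowMul_coeff, zpowMul_coeff]
  congr 1
  ring

theorem zpowMul_zero' (m : HahnModule ℤ ℂ V) : zpowMul V 0 m = m := by
  apply (of ℂ).symm.injective
  ext c
  rw [zpowMul_coeff, sub_zero]

theorem zpowMul_mem_posPart (k : ℕ) (m : HahnModule ℤ ℂ V) (hm : m ∈ posPart V) :
    zpowMul V k m ∈ posPart V := by
  intro a ha
  rw [zpowMul_coeff]
  exact hm _ (by omega)

theorem exists_zpow_mem_posPart (m : HahnModule ℤ ℂ V) :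
    ∃ k : ℕ, zpowMul V k m ∈ posPart V := by
  refine ⟨(-((of ℂ).symm m).order).toNat, ?_⟩
  intro a ha
  rw [zpowMul_coeff]
  apply HahnSeries.coeff_eq_zero_of_lt_order
  omega

theorem coeff_single_mul' (k a : ℤ) (r : ℂ) (P : LaurentSeries ℂ) :
    ((HahnSeries.single k r : LaurentSeries ℂ) * P).coeff a = r * P.coeff (a - k) := by
  have h := HahnSeries.coeff_single_mul_add (r := r) (x := P) (a := a - k) (b := k)
  rwa [sub_add_cancel] at h

theorem sigmaInv_single (k : ℤ) : ∃ u : ℂ,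
    sigmaInv (HahnSeries.single k (1 : ℂ)) = HahnSeries.single k u := by
  refine ⟨((((-1 : ℤˣ) ^ k : ℤˣ) : ℤ)) • (1 : ℂ), ?_⟩
  ext a
  show ((((-1 : ℤˣ) ^ a : ℤˣ) : ℤ)) • (HahnSeries.single k (1 : ℂ)).coeff a = _
  by_cases h : a = k
  · subst h; rw [HahnSeries.coeff_single_same, HahnSeries.coeff_single_same]
  · rw [HahnSeries.coeff_single_of_ne h, HahnSeries.coeff_single_of_ne h, smul_zero]

theorem K_zpow {K : HahnModule ℤ ℂ V → HahnModule ℤ ℂ V → LaurentSeries ℂ}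
    (hKPl : ∀ (P : LaurentSeries ℂ) (x w : HahnModule ℤ ℂ V), K (P • x) w = P * K x w)
    (hKPr : ∀ (P : LaurentSeries ℂ) (x w : HahnModule ℤ ℂ V),
      K w (P • x) = sigmaInv P * K w x) (i j a : ℤ) (x y : HahnModule ℤ ℂ V)
    (h : (K x y).coeff (a - i - j) = 0) :
    (K (zpowMul V i x) (zpowMul V j y)).coeff a = 0 := by
  show (K ((HahnSeries.single i (1 : ℂ) : LaurentSeries ℂ) • x)
    ((HahnSeries.single j (1 : ℂ) : LaurentSeries ℂ) • y)).coeff a = 0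
  obtain ⟨u, hu⟩ := sigmaInv_single j
  rw [hKPl, hKPr, hu, coeff_single_mul', coeff_single_mul', h, mul_zero, mul_zero]

theorem zpow_neg_mem {L : Submodule ℂ (HahnModule ℤ ℂ V)} (hL : IsOppositeFiltration L)
    (k : ℕ) (l : HahnModule ℤ ℂ V) (hl : l ∈ L) : zpowMul V (-(k : ℤ)) l ∈ L := by
  induction k generalizing l with
  | zero => simpa [zpowMul_zero'] using hl
  | succ k ih =>
    obtain ⟨l', hl', rfl⟩ := hL.2 hl
    have := ih l' hl'
    rw [zpowMul_zpowMul]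
    convert this using 2
    push_cast
    ring

theorem le_oppositeOf {L : Submodule ℂ (HahnModule ℤ ℂ V)} (hL : IsOppositeFiltration L)
    (k : ℕ) (l : HahnModule ℤ ℂ V) (hl : l ∈ L) (hk : zpowMul V k l ∈ posPart V) :
    l ∈ oppositeOf (sectionOf L) := by
  induction k generalizing l with
  | zero =>
    have h0 : l ∈ posPart V := by simpa [zpowMul_zero'] using hk
    have : l = 0 := (Submodule.disjoint_def.mp hL.1.disjoint) l h0 hl
    rw [this]
    exact zero_mem _
  | succ k ih =>
    have htop : zpowMul V k l ∈ posPart V ⊔ L := by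
      rw [hL.1.sup_eq_top]; trivial
    obtain ⟨p, hp, l0, hl0, e⟩ := Submodule.mem_sup.mp htop
    have e' : l0 = zpowMul V k l - p := by rw [← e]; abel
    have hb : zpowMul V 1 l0 ∈ sectionOf L := by
      refine ⟨?_, Submodule.mem_map_of_mem hl0⟩
      rw [e', map_sub, zpowMul_zpowMul]
      apply sub_mem
      · convert hk using 2
        push_cast
        ring
      · exact_mod_cast zpowMul_mem_posPart 1 p hp
    have h1 : l - zpowMul V (-(k : ℤ)) l0 ∈ oppositeOf (sectionOf L) := by
      apply ih _ (sub_mem hl (zpow_neg_mem hL k l0 hl0))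
      rw [map_sub, zpowMul_zpowMul, add_neg_cancel, zpowMul_zero', e', sub_sub_cancel]
      exact hp
    have h2 : zpowMul V (-(k : ℤ)) l0 ∈ oppositeOf (sectionOf L) := by
      apply Submodule.subset_span
      refine ⟨k + 1, by omega, _, hb, ?_⟩
      rw [zpowMul_zpowMul]
      congr 2
      push_cast
      ring
    have := add_mem h1 h2
    rwa [sub_add_cancel] at this

/-- Let `K` be a higher residue pairing on `V((z))`, i.e. a
ℂ-bilinear pairing with values in `ℂ((z))` which is `ℂ((z))`-sesquilinear with
respect to the involution `σ : z ↦ −z` and satisfies `K(V[[z]], V[[z]]) ⊆ zⁿℂ[[z]]`.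
For an opposite filtration `L` with associated section `B = V[[z]] ∩ z·L`, the
following are equivalent:
(c) `K(b, b′) ∈ ℂ·zⁿ` for all `b, b′ ∈ B`;
(d) `K(l, l′) ∈ zⁿ⁻²·ℂ[z⁻¹]` for all `l, l′ ∈ L`. -/
theorem metric_condition
    (V : Type*) [AddCommGroup V] [Module ℂ V] [FiniteDimensional ℂ V] (n : ℤ)
    (K : HahnModule ℤ ℂ V → HahnModule ℤ ℂ V → LaurentSeries ℂ)
    (hKaddl : ∀ x y w : HahnModule ℤ ℂ V, K (x + y) w = K x w + K y w)
    (hKaddr : ∀ x y w : HahnModule ℤ ℂ V, K w (x + y) = K w x + K w y)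
    (hKsmull : ∀ (c : ℂ) (x w : HahnModule ℤ ℂ V), K (c • x) w = c • K x w)
    (hKsmulr : ∀ (c : ℂ) (x w : HahnModule ℤ ℂ V), K w (c • x) = c • K w x)
    (hKPl : ∀ (P : LaurentSeries ℂ) (x w : HahnModule ℤ ℂ V), K (P • x) w = P * K x w)
    (hKPr : ∀ (P : LaurentSeries ℂ) (x w : HahnModule ℤ ℂ V),
      K w (P • x) = sigmaInv P * K w x)
    (hKpure : ∀ x ∈ posPart V, ∀ y ∈ posPart V, ∀ j : ℤ, j < n → (K x y).coeff j = 0)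
    (L : Submodule ℂ (HahnModule ℤ ℂ V)) (hL : IsOppositeFiltration L) :
    (∀ b ∈ sectionOf L, ∀ b' ∈ sectionOf L, ∀ j : ℤ, j ≠ n → (K b b').coeff j = 0) ↔
    (∀ l ∈ L, ∀ l' ∈ L, ∀ j : ℤ, n - 2 < j → (K l l').coeff j = 0) := by
  constructor
  · intro hc l hl l' hl' a ha
    obtain ⟨k, hk⟩ := exists_zpow_mem_posPart l
    obtain ⟨k', hk'⟩ := exists_zpow_mem_posPart l'
    have h1 := le_oppositeOf hL k l hl hk
    have h2 := le_oppositeOf hL k' l' hl' hk'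
    have hz1 : ∀ w, K 0 w = 0 := fun w => by simpa using hKaddl 0 0 w
    have hz2 : ∀ w, K w 0 = 0 := fun w => by simpa using hKaddr 0 0 w
    clear hl hl' hk hk'
    unfold oppositeOf at h1 h2
    induction h1 using Submodule.span_induction with
    | zero => rw [hz1]; rfl
    | add x y _ _ hx hy => rw [hKaddl, HahnSeries.coeff_add, hx, hy, add_zero]
    | smul c x _ hx => rw [hKsmull, HahnSeries.coeff_smul, hx, smul_zero]
    | mem x hx =>
      obtain ⟨i, hi, b, hb, rfl⟩ := hx
      induction h2 using Submodule.span_induction with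
      | zero => rw [hz2]; rfl
      | add x y _ _ hx hy => rw [hKaddr, HahnSeries.coeff_add, hx, hy, add_zero]
      | smul c x _ hx => rw [hKsmulr, HahnSeries.coeff_smul, hx, smul_zero]
      | mem x hx =>
        obtain ⟨j, hj, b', hb', rfl⟩ := hx
        exact K_zpow hKPl hKPr _ _ _ _ _ (hc b hb b' hb' _ (by omega))
  · rintro hd b ⟨hb, l, hl, rfl⟩ b' ⟨hb', l', hl', rfl⟩ j hj
    rcases lt_or_gt_of_ne hj with h | h
    · exact hKpure _ hb _ hb' j h
    · exact K_zpow hKPl hKPr _ _ _ _ _ (hd l hl l' hl' _ (by omega))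

end
end

section
/- The natural map B̂ ⊗_ℂ ℂ[[z]] → W[[z]], b ⊗ P ↦ P·b, is injective, and, writing B̂[[z]] for its image, one has the internal direct sum of ℂ-vector spaces W[[z]] = B̂[[z]] ⊕ U[[z]], where U[[z]] ⊆ W[[z]] is the subspace of power series all of whose coefficients lie in U. -/
noncomputable section

variable (W : Type*) [AddCommGroup W] [Module ℂ W]

/-- Formal power series with coefficients in `W`, modelled as sequences `ℕ → W`. -/
abbrev PS (W : Type*) := ℕ → W

/-- The multiplication `ℂ[[z]] × W[[z]] → W[[z]]`,
`(P·f)ₙ = ∑_{i+j=n} Pᵢ·fⱼ`, as a ℂ-bilinear map. -/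
def psSmul : PowerSeries ℂ →ₗ[ℂ] PS W →ₗ[ℂ] PS W :=
  LinearMap.mk₂ ℂ
    (fun P f n => ∑ i ∈ Finset.range (n + 1), (PowerSeries.coeff i P) • f (n - i))
    (by
      intro P P' f
      funext n
      simp [add_smul, Finset.sum_add_distrib])
    (by
      intro c P f
      funext n
      simp [Finset.smul_sum, mul_smul])
    (by
      intro P f f'
      funext n
      simp [smul_add, Finset.sum_add_distrib])
    (by
      intro c P f
      funext n
      simp only [Pi.smul_apply, Finset.smul_sum]
      exact Finset.sum_congr rfl fun i _ => smul_comm _ _ _)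

variable {W}

/-- The natural map `B̂ ⊗_ℂ ℂ[[z]] → W[[z]]`, `b ⊗ P ↦ P·b`. -/
def tensorToPS (B : Submodule ℂ (PS W)) :
    TensorProduct ℂ B (PowerSeries ℂ) →ₗ[ℂ] PS W :=
  TensorProduct.lift (((psSmul W).flip).comp B.subtype)

/-- The subspace `U[[z]] ⊆ W[[z]]` of power series all of whose coefficients lie
in `U`. -/
def coeffIn (U : Submodule ℂ W) : Submodule ℂ (PS W) where
  carrier := {f | ∀ n, f n ∈ U}
  zero_mem' := fun _ => U.zero_mem
  add_mem' := fun hf hg n => U.add_mem (hf n) (hg n)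
  smul_mem' := fun c _ hf n => U.smul_mem c (hf n)

/-- The `n`-th coefficient map `B ⊗ ℂ[[z]] → B`. -/
def tcoeff (B : Submodule ℂ (PS W)) (n : ℕ) :
    TensorProduct ℂ B (PowerSeries ℂ) →ₗ[ℂ] B :=
  (TensorProduct.rid ℂ B).toLinearMap.comp
    (LinearMap.lTensor B (PowerSeries.coeff (R := ℂ) n))

lemma tcoeff_tmul (B : Submodule ℂ (PS W)) (n : ℕ) (b : B) (P : PowerSeries ℂ) :
    tcoeff B n (TensorProduct.tmul ℂ b P) = PowerSeries.coeff n P • b := by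
  simp [tcoeff]

lemma tensorToPS_apply (B : Submodule ℂ (PS W)) (x : TensorProduct ℂ B (PowerSeries ℂ)) (n : ℕ) :
    tensorToPS B x n = ∑ i ∈ Finset.range (n + 1), (tcoeff B i x : PS W) (n - i) := by
  induction x with
  | zero => simp
  | tmul b P => simp [tcoeff_tmul, tensorToPS, psSmul]
  | add x y hx hy =>
    simp only [map_add, Pi.add_apply, hx, hy, Submodule.coe_add, Finset.sum_add_distrib]

lemma eq_zero_of_tcoeff (B : Submodule ℂ (PS W)) (x : TensorProduct ℂ B (PowerSeries ℂ))
    (h : ∀ n, tcoeff B n x = 0) : x = 0 := by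
  classical
  let b := Module.Basis.ofVectorSpace ℂ B
  have key : ∀ (y : TensorProduct ℂ B (PowerSeries ℂ)) i n,
      PowerSeries.coeff n (TensorProduct.equivFinsuppOfBasisLeft b y i)
        = b.repr (tcoeff B n y) i := by
    intro y i n
    induction y with
    | zero => simp
    | tmul c P =>
      rw [tcoeff_tmul, TensorProduct.equivFinsuppOfBasisLeft_apply_tmul_apply]
      simp [mul_comm]
    | add x y hx hy => simp only [map_add, Finsupp.add_apply, hx, hy]
  apply (TensorProduct.equivFinsuppOfBasisLeft (N := PowerSeries ℂ) b).injective
  ext i n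
  rw [key, h]
  simp

lemma exists_tcoeff (B : Submodule ℂ (PS W)) [FiniteDimensional ℂ B] (c : ℕ → B) :
    ∃ x, ∀ n, tcoeff B n x = c n := by
  let b := Module.finBasis ℂ B
  refine ⟨∑ i, TensorProduct.tmul ℂ (b i) (PowerSeries.mk fun n => b.repr (c n) i), fun n => ?_⟩
  simp only [map_sum, tcoeff_tmul, PowerSeries.coeff_mk]
  exact b.sum_repr (c n)

/-- The recursive choice of coefficients. -/
def recCoeff (B : Submodule ℂ (PS W)) (g : W → B) (f : PS W) : ℕ → B
  | n => g (f n - ∑ i : Fin n, (recCoeff B g f i.1 : PS W) (n - i.1))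
termination_by n => n
decreasing_by exact i.2

/-- Let `U ⊆ W` be ℂ-subspaces and `B̂ ⊆ W[[z]]` a
finite-dimensional subspace such that the composite of the constant-term map
`B̂ → W` with the quotient map `W → W/U` is a ℂ-linear isomorphism.  Then the
natural map `B̂ ⊗_ℂ ℂ[[z]] → W[[z]]`, `b ⊗ P ↦ P·b`, is injective, and
`W[[z]] = B̂[[z]] ⊕ U[[z]]`, where `B̂[[z]]` is its image. -/
theorem tensor_powerseries_decomposition
    (W : Type*) [AddCommGroup W] [Module ℂ W] (U : Submodule ℂ W)
    (B : Submodule ℂ (PS W)) [FiniteDimensional ℂ B]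
    (hB : Function.Bijective
      ⇑(U.mkQ.comp ((LinearMap.proj (R := ℂ) (φ := fun _ : ℕ => W) 0).comp B.subtype))) :
    Function.Injective ⇑(tensorToPS B) ∧
    IsCompl (LinearMap.range (tensorToPS B)) (coeffIn U) := by
  have inj0 : ∀ x, tensorToPS B x ∈ coeffIn U → x = 0 := by
    intro x hx
    apply eq_zero_of_tcoeff
    intro n
    induction n using Nat.strong_induction_on with
    | _ n ih =>
      have h1 : tensorToPS B x n ∈ U := hx n
      rw [tensorToPS_apply, Finset.sum_range_succ, Finset.sum_eq_zero, zero_add,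
        Nat.sub_self] at h1
      · apply hB.1
        rw [map_zero]
        exact (Submodule.Quotient.mk_eq_zero U).2 h1
      · intro i hi
        rw [ih i (Finset.mem_range.1 hi)]
        rfl
  refine ⟨(injective_iff_map_eq_zero _).2 fun x hx => inj0 x (hx ▸ Submodule.zero_mem _), ?_, ?_⟩
  · rw [Submodule.disjoint_def]
    rintro _ ⟨x, rfl⟩ hx
    rw [inj0 x hx, map_zero]
  · rw [codisjoint_iff, eq_top_iff]
    intro f _
    have hg : ∀ w : W, ∃ b : B, w - (b : PS W) 0 ∈ U := by
      intro w
      obtain ⟨b, hb⟩ := hB.2 (U.mkQ w)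
      exact ⟨b, (Submodule.Quotient.eq U).1 hb.symm⟩
    choose g hg using hg
    obtain ⟨x, hx⟩ := exists_tcoeff B (recCoeff B g f)
    rw [Submodule.mem_sup]
    refine ⟨tensorToPS B x, ⟨x, rfl⟩, f - tensorToPS B x, ?_, by abel⟩
    intro n
    rw [Pi.sub_apply, tensorToPS_apply, Finset.sum_range_succ, Nat.sub_self, ← sub_sub]
    simp only [hx]
    rw [Finset.sum_range fun i => (recCoeff B g f i : PS W) (n - i)]
    conv => enter [2, 2]; rw [recCoeff]
    exact hg _

end
end

section
/- For every k ∈ ℤ one has the internal direct sum of ℂ-vector spaces z⁻ᵏT[[z]] = z⁻ᵏB̂[[z]] ⊕ D_f(z⁻ᵏN[[z]]), and consequently T((z)) = B̂((z)) ⊕ D_f(N((z))). -/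
noncomputable section

/-!
Formal Laurent series with coefficients in a complex vector space `X` are modelled
as `HahnSeries ℤ X` (coefficients supported on a partially well-ordered, i.e.
bounded-below, set of integers); `X[[z]]` is the subspace of series supported in
nonnegative degrees.
-/

variable (X : Type*) [AddCommGroup X] [Module ℂ X]

/-- `X[[z]] ⊆ X((z))`: series with vanishing coefficients in negative degrees. -/
def posSub : Submodule ℂ (HahnSeries ℤ X) where
  carrier := {f | ∀ n : ℤ, n < 0 → f.coeff n = 0}
  zero_mem' := fun _ _ => rfl
  add_mem' := by
    intro a b ha hb n hn
    rw [HahnSeries.coeff_add, ha n hn, hb n hn, add_zero]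
  smul_mem' := by
    intro c f hf n hn
    rw [HahnSeries.coeff_smul, hf n hn, smul_zero]

/-- Multiplication by `z^k` on `X((z))`, i.e. the shift of coefficients. -/
def shiftBy (k : ℤ) : HahnSeries ℤ X →ₗ[ℂ] HahnSeries ℤ X where
  toFun f :=
    { coeff := fun n => f.coeff (n - k)
      isPWO_support' := (f.isPWO_support.image_of_monotone
          (fun a b h => add_le_add_right h k)).mono (by
        intro n hn
        rw [Function.mem_support] at hn
        exact ⟨n - k, hn, by ring⟩) }
  map_add' x y := by
    ext n
    simp [HahnSeries.coeff_add]
  map_smul' c x := by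
    ext n
    simp [HahnSeries.coeff_smul]

/-- The coefficientwise extension of a ℂ-linear map to Laurent series. -/
def coeffwise {X Y : Type*} [AddCommGroup X] [Module ℂ X] [AddCommGroup Y] [Module ℂ Y]
    (g : X →ₗ[ℂ] Y) : HahnSeries ℤ X →ₗ[ℂ] HahnSeries ℤ Y where
  toFun f :=
    { coeff := fun n => g (f.coeff n)
      isPWO_support' := f.isPWO_support.mono (by
        intro n hn
        rw [Function.mem_support] at hn
        rw [HahnSeries.mem_support]
        intro h
        rw [h, map_zero] at hn
        exact hn rfl) }
  map_add' x y := by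
    ext n
    simp [HahnSeries.coeff_add]
  map_smul' c x := by
    ext n
    simp [HahnSeries.coeff_smul]

/-- The coefficient functional `f ↦ f(k)`. -/
def evCoeff (k : ℤ) : HahnSeries ℤ X →ₗ[ℂ] X where
  toFun f := f.coeff k
  map_add' x y := by simp [HahnSeries.coeff_add]
  map_smul' c x := by simp [HahnSeries.coeff_smul]

/-- The convolution multiplication `ℂ[[z]] × X[[z]] → X((z))`, `(P·f)ₙ = ∑ Pᵢ·f_{n−i}`,
as a ℂ-bilinear map. -/
def psConv : PowerSeries ℂ →ₗ[ℂ] (posSub X) →ₗ[ℂ] HahnSeries ℤ X :=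
  LinearMap.mk₂ ℂ
    (fun P b =>
      { coeff := fun n => ∑ i ∈ Finset.range (n.toNat + 1),
          (PowerSeries.coeff i P) • (b : HahnSeries ℤ X).coeff (n - i)
        isPWO_support' := Set.IsWF.isPWO (BddBelow.wellFoundedOn_lt ⟨0, by
          intro n hn
          rw [Function.mem_support] at hn
          by_contra hneg
          rw [not_le] at hneg
          exact hn (Finset.sum_eq_zero fun i _ => by
            rw [b.2 (n - i) (by omega), smul_zero]) ⟩) })
    (by
      intro P P' b
      ext n
      simp [add_smul, Finset.sum_add_distrib])
    (by
      intro c P b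
      ext n
      simp [Finset.smul_sum, mul_smul])
    (by
      intro P b b'
      ext n
      simp only [Submodule.coe_add, HahnSeries.coeff_add, smul_add]
      rw [Finset.sum_add_distrib])
    (by
      intro c P b
      ext n
      simp only [Submodule.coe_smul, HahnSeries.coeff_smul, Finset.smul_sum]
      exact Finset.sum_congr rfl fun i _ => smul_comm _ _ _)

variable {X}

/-- `B̂[[z]]`: the image of `B̂ ⊗_ℂ ℂ[[z]]` in `T[[z]]` under `b ⊗ P ↦ P·b`. -/
def psSpan (B : Submodule ℂ (HahnSeries ℤ X)) (hB : B ≤ posSub X) :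
    Submodule ℂ (HahnSeries ℤ X) :=
  LinearMap.range (TensorProduct.lift
    (((psConv X).flip).comp (Submodule.inclusion hB)))

/-- `B̂((z))`: the image of `B̂ ⊗_ℂ ℂ((z))` in `T((z))`, equivalently the union of the
subspaces `z⁻ʲ·B̂[[z]]` for `j ≥ 0`. -/
def laurSpan (B : Submodule ℂ (HahnSeries ℤ X)) (hB : B ≤ posSub X) :
    Submodule ℂ (HahnSeries ℤ X) :=
  ⨆ j : ℕ, (psSpan B hB).map (shiftBy X (-(j : ℤ)))

lemma coeff_shiftBy (k : ℤ) (f : HahnSeries ℤ X) (n : ℤ) :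
    (shiftBy X k f).coeff n = f.coeff (n - k) := rfl

lemma coeff_coeffwise {X Y : Type*} [AddCommGroup X] [Module ℂ X] [AddCommGroup Y] [Module ℂ Y]
    (g : X →ₗ[ℂ] Y) (f : HahnSeries ℤ X) (n : ℤ) :
    (coeffwise g f).coeff n = g (f.coeff n) := rfl

lemma shiftBy_shiftBy (k l : ℤ) (f : HahnSeries ℤ X) :
    shiftBy X k (shiftBy X l f) = shiftBy X (k + l) f := by
  ext n
  simp only [coeff_shiftBy]
  congr 1
  ring

lemma shiftBy_zero' (f : HahnSeries ℤ X) : shiftBy X 0 f = f := by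
  ext n
  simp only [coeff_shiftBy, sub_zero]

lemma mem_shift_pos (k : ℤ) (f : HahnSeries ℤ X) :
    f ∈ (posSub X).map (shiftBy X (-k)) ↔ ∀ n : ℤ, n < -k → f.coeff n = 0 := by
  constructor
  · rintro ⟨g, hg, rfl⟩ n hn
    rw [coeff_shiftBy]
    exact hg _ (by omega)
  · intro h
    refine ⟨shiftBy X k f, ?_, ?_⟩
    · intro n hn
      rw [coeff_shiftBy]
      exact h _ (by omega)
    · rw [shiftBy_shiftBy, neg_add_cancel, shiftBy_zero']

lemma exists_mem_shift_pos (f : HahnSeries ℤ X) :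
    ∃ k : ℕ, ∀ n : ℤ, n < -(k : ℤ) → f.coeff n = 0 := by
  refine ⟨(-f.order).toNat, fun n hn => ?_⟩
  apply HahnSeries.coeff_eq_zero_of_lt_order
  omega

/-- The convergent sum `∑ zⁱ aᵢ` of series without polar part. -/
def seqSum (a : ℕ → posSub X) : HahnSeries ℤ X where
  coeff := fun n => ∑ i ∈ Finset.range (n.toNat + 1), (a i : HahnSeries ℤ X).coeff (n - i)
  isPWO_support' := Set.IsWF.isPWO (BddBelow.wellFoundedOn_lt ⟨0, by
    intro n hn
    rw [Function.mem_support] at hn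
    by_contra hneg
    rw [not_le] at hneg
    exact hn (Finset.sum_eq_zero fun i _ => by
      rw [(a i).2 (n - i) (by omega)])⟩)

lemma coeff_seqSum (a : ℕ → posSub X) (n : ℤ) : (seqSum a).coeff n =
    ∑ i ∈ Finset.range (n.toNat + 1), (a i : HahnSeries ℤ X).coeff (n - i) := rfl

lemma seqSum_mem (a : ℕ → posSub X) : seqSum a ∈ posSub X := by
  intro n hn
  rw [coeff_seqSum]
  exact Finset.sum_eq_zero fun i _ => by rw [(a i).2 (n - i) (by omega)]

lemma seqSum_succ (a : ℕ → posSub X) :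
    seqSum a = (a 0 : HahnSeries ℤ X) + shiftBy X 1 (seqSum fun i => a (i + 1)) := by
  ext n
  rw [HahnSeries.coeff_add, coeff_shiftBy]
  rcases lt_trichotomy n 0 with h | h | h
  · rw [seqSum_mem a n h, (a 0).2 n h, seqSum_mem _ (n - 1) (by omega), add_zero]
  · subst h
    rw [seqSum_mem _ (0 - 1) (by omega), coeff_seqSum]
    simp
  · obtain ⟨m, rfl⟩ : ∃ m : ℕ, n = m + 1 := ⟨(n - 1).toNat, by omega⟩
    rw [coeff_seqSum, coeff_seqSum]
    have h1 : ((m : ℤ) + 1).toNat = m + 1 := by omega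
    have h2 : ((m : ℤ) + 1 - 1).toNat = m := by omega
    rw [h1, h2, Finset.sum_range_succ', add_comm]
    congr 1
    simp

lemma psConv_eq (P : PowerSeries ℂ) (b : posSub X) :
    psConv X P b = seqSum fun i => PowerSeries.coeff i P • b := rfl

lemma psConv_mem (B : Submodule ℂ (HahnSeries ℤ X)) (hB : B ≤ posSub X)
    (P : PowerSeries ℂ) (b : B) :
    psConv X P (Submodule.inclusion hB b) ∈ psSpan B hB :=
  ⟨b ⊗ₜ P, by simp⟩

lemma psSpan_induction (B : Submodule ℂ (HahnSeries ℤ X)) (hB : B ≤ posSub X)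
    {p : HahnSeries ℤ X → Prop} (h0 : p 0) (hadd : ∀ x y, p x → p y → p (x + y))
    (hc : ∀ P (b : B), p (psConv X P (Submodule.inclusion hB b))) :
    ∀ x ∈ psSpan B hB, p x := by
  rintro x ⟨t, rfl⟩
  induction t using TensorProduct.induction_on with
  | zero => simpa using h0
  | tmul b P => simpa using hc P b
  | add x y hx hy => rw [map_add]; exact hadd _ _ hx hy

lemma psSpan_le (B : Submodule ℂ (HahnSeries ℤ X)) (hB : B ≤ posSub X) :
    psSpan B hB ≤ posSub X := by
  intro x hx
  refine psSpan_induction B hB (p := fun x => x ∈ posSub X) (zero_mem _)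
    (fun _ _ => add_mem) ?_ x hx
  intro P b
  rw [psConv_eq]
  exact seqSum_mem _

lemma psSpan_shift (B : Submodule ℂ (HahnSeries ℤ X)) (hB : B ≤ posSub X) :
    ∀ x ∈ psSpan B hB, shiftBy X 1 x ∈ psSpan B hB := by
  refine psSpan_induction B hB (by simp) ?_ ?_
  · intro x y hx hy
    rw [map_add]
    exact add_mem hx hy
  · intro P b
    have : shiftBy X 1 (psConv X P (Submodule.inclusion hB b)) =
        psConv X (PowerSeries.X * P) (Submodule.inclusion hB b) := by
      rw [psConv_eq, psConv_eq,
        seqSum_succ (fun i => PowerSeries.coeff i (PowerSeries.X * P) • Submodule.inclusion hB b)]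
      simp [PowerSeries.coeff_succ_X_mul]
    rw [this]
    exact psConv_mem B hB _ _

lemma psSpan_shift_nat (B : Submodule ℂ (HahnSeries ℤ X)) (hB : B ≤ posSub X) (n : ℕ) :
    ∀ x ∈ psSpan B hB, shiftBy X n x ∈ psSpan B hB := by
  induction n with
  | zero => intro x hx; simpa [shiftBy_zero'] using hx
  | succ n ih =>
    intro x hx
    have := psSpan_shift B hB _ (ih x hx)
    rw [shiftBy_shiftBy] at this
    rw [Nat.cast_succ, add_comm]
    exact this

lemma psSpan_shift_mono (B : Submodule ℂ (HahnSeries ℤ X)) (hB : B ≤ posSub X) {j k : ℕ}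
    (h : j ≤ k) : (psSpan B hB).map (shiftBy X (-(j : ℤ))) ≤
      (psSpan B hB).map (shiftBy X (-(k : ℤ))) := by
  rintro _ ⟨x, hx, rfl⟩
  refine ⟨shiftBy X ((k - j : ℕ) : ℤ) x, psSpan_shift_nat B hB _ x hx, ?_⟩
  rw [shiftBy_shiftBy]
  congr 2
  omega

lemma psSpan_decomp (B : Submodule ℂ (HahnSeries ℤ X)) (hB : B ≤ posSub X) :
    ∀ x ∈ psSpan B hB, ∃ b ∈ B, ∃ y ∈ psSpan B hB, x = b + shiftBy X 1 y := by
  refine psSpan_induction B hB ⟨0, zero_mem _, 0, zero_mem _, by simp⟩ ?_ ?_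
  · rintro _ _ ⟨b, hb, y, hy, rfl⟩ ⟨b', hb', y', hy', rfl⟩
    refine ⟨b + b', add_mem hb hb', y + y', add_mem hy hy', ?_⟩
    rw [map_add]
    abel
  · intro P b
    refine ⟨PowerSeries.coeff 0 P • (b : HahnSeries ℤ X), B.smul_mem _ b.2,
      psConv X (PowerSeries.mk fun i => PowerSeries.coeff (i + 1) P)
        (Submodule.inclusion hB b), psConv_mem B hB _ _, ?_⟩
    rw [psConv_eq, psConv_eq, seqSum_succ]
    simp

lemma seqSum_mem_psSpan (B : Submodule ℂ (HahnSeries ℤ X)) (hB : B ≤ posSub X)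
    [FiniteDimensional ℂ B] (b : ℕ → B) :
    seqSum (fun i => Submodule.inclusion hB (b i)) ∈ psSpan B hB := by
  let e := Module.finBasis ℂ B
  have : seqSum (fun i => Submodule.inclusion hB (b i)) =
      ∑ j, psConv X (PowerSeries.mk fun i => e.repr (b i) j) (Submodule.inclusion hB (e j)) := by
    ext n
    have hs : ∀ (n : ℤ) (s : Finset (Fin (Module.finrank ℂ B))) (F : _ → HahnSeries ℤ X),
        (∑ j ∈ s, F j).coeff n = ∑ j ∈ s, (F j).coeff n := fun n s F =>
      map_sum (evCoeff X n) F s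
    rw [hs]
    simp only [psConv_eq, coeff_seqSum]
    rw [Finset.sum_comm]
    refine Finset.sum_congr rfl fun i _ => ?_
    have h1 : (b i : HahnSeries ℤ X) = ∑ j, e.repr (b i) j • (e j : HahnSeries ℤ X) := by
      have := congrArg B.subtype (e.sum_repr (b i))
      rw [map_sum] at this
      exact this.symm
    rw [Submodule.coe_inclusion, h1, hs]
    simp
  rw [this]
  exact sum_mem fun j _ => psConv_mem B hB _ _

lemma single_mem_pos (x : X) : HahnSeries.single (0 : ℤ) x ∈ posSub X := by
  intro n hn
  exact HahnSeries.coeff_single_of_ne hn.ne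

/-- The twisted differential. -/
def twD {N T : Type*} [AddCommGroup N] [Module ℂ N] [AddCommGroup T] [Module ℂ T]
    (d w : N →ₗ[ℂ] T) : HahnSeries ℤ N →ₗ[ℂ] HahnSeries ℤ T :=
  (shiftBy T 1).comp (coeffwise d) + coeffwise w

lemma coeff_twD {N T : Type*} [AddCommGroup N] [Module ℂ N] [AddCommGroup T] [Module ℂ T]
    (d w : N →ₗ[ℂ] T) (β : HahnSeries ℤ N) (n : ℤ) :
    (twD d w β).coeff n = d (β.coeff (n - 1)) + w (β.coeff n) := rfl

lemma twD_shift {N T : Type*} [AddCommGroup N] [Module ℂ N] [AddCommGroup T] [Module ℂ T]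
    (d w : N →ₗ[ℂ] T) (k : ℤ) (β : HahnSeries ℤ N) :
    twD d w (shiftBy N k β) = shiftBy T k (twD d w β) := by
  ext n
  simp only [coeff_twD, coeff_shiftBy]
  rw [show n - 1 - k = n - k - 1 by ring]

lemma twD_pos {N T : Type*} [AddCommGroup N] [Module ℂ N] [AddCommGroup T] [Module ℂ T]
    (d w : N →ₗ[ℂ] T) {β : HahnSeries ℤ N} (h : β ∈ posSub N) : twD d w β ∈ posSub T := by
  intro n hn
  rw [coeff_twD, h n hn, h (n - 1) (by omega), map_zero, map_zero, add_zero]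

section key
variable {M N T : Type*} [AddCommGroup M] [Module ℂ M] [AddCommGroup N] [Module ℂ N]
    [AddCommGroup T] [Module ℂ T]

lemma key_disjoint
    (d' : M →ₗ[ℂ] N) (d : N →ₗ[ℂ] T) (w' : M →ₗ[ℂ] N) (w : N →ₗ[ℂ] T)
    (hdd' : d.comp d' = 0)
    (hdw' : d.comp w' = -(w.comp d'))
    (hker : LinearMap.ker w ≤ LinearMap.range w')
    (B : Submodule ℂ (HahnSeries ℤ T)) (hBpos : B ≤ posSub T)
    (hinj : Function.Injective
      ⇑((LinearMap.range w).mkQ.comp ((evCoeff T 0).comp B.subtype))) (n : ℕ) :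
    ∀ x ∈ psSpan B hBpos, ∀ β ∈ posSub N, x = twD d w β → x.coeff n = 0 := by
  have step : ∀ x ∈ psSpan B hBpos, ∀ β ∈ posSub N, x = twD d w β →
      ∃ y ∈ psSpan B hBpos, ∃ γ ∈ posSub N, y = twD d w γ ∧ x = shiftBy T 1 y := by
    intro x hx β hβ hxβ
    obtain ⟨b, hb, y, hy, rfl⟩ := psSpan_decomp B hBpos x hx
    have hc : ∀ n, b.coeff n + y.coeff (n - 1) = d (β.coeff (n - 1)) + w (β.coeff n) := by
      intro n
      rw [← coeff_twD, ← hxβ, HahnSeries.coeff_add, coeff_shiftBy]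
    have hypos := psSpan_le B hBpos hy
    have h0 := hc 0
    rw [hypos (0 - 1) (by omega), hβ (0 - 1) (by omega), map_zero, add_zero, zero_add] at h0
    have hb0 : b = 0 := by
      have : (⟨b, hb⟩ : B) = 0 := by
        apply hinj
        rw [map_zero]
        change (LinearMap.range w).mkQ (b.coeff 0) = 0
        rw [h0, Submodule.mkQ_apply, Submodule.Quotient.mk_eq_zero]
        exact ⟨_, rfl⟩
      simpa using congrArg Subtype.val this
    subst hb0
    obtain ⟨m, hm⟩ := hker (show β.coeff 0 ∈ LinearMap.ker w from by
      rw [LinearMap.mem_ker, ← h0]; rfl)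
    have hdm : d (β.coeff 0) = - w (d' m) := by
      rw [← hm]
      exact LinearMap.congr_fun hdw' m
    have hddm : d (d' m) = 0 := LinearMap.congr_fun hdd' m
    have hγ : shiftBy N (-1) (β - HahnSeries.single 0 (β.coeff 0))
        - HahnSeries.single 0 (d' m) ∈ posSub N := by
      intro n hn
      rw [HahnSeries.coeff_sub, coeff_shiftBy, HahnSeries.coeff_sub,
        HahnSeries.coeff_single_of_ne hn.ne]
      by_cases h : n = -1
      · subst h; simp
      · rw [HahnSeries.coeff_single_of_ne (by omega), hβ _ (by omega)]; simp
    refine ⟨y, hy, _, hγ, ?_, by simp⟩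
    ext n
    rcases lt_trichotomy n 0 with h | h | h
    · rw [hypos n h, twD_pos d w hγ n h]
    · subst h
      rw [coeff_twD, hγ (0 - 1) (by omega), HahnSeries.coeff_sub, coeff_shiftBy,
        HahnSeries.coeff_sub, HahnSeries.coeff_single_same,
        HahnSeries.coeff_single_of_ne (by omega)]
      have := hc 1
      simp only [sub_self, HahnSeries.coeff_zero, zero_add, hdm] at this
      rw [this]
      simp
      abel
    · rw [coeff_twD]
      simp only [HahnSeries.coeff_sub, coeff_shiftBy]
      rw [HahnSeries.coeff_single_of_ne (show n - -1 ≠ 0 by omega),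
        HahnSeries.coeff_single_of_ne (show n ≠ 0 by omega)]
      have := hc (n + 1)
      simp only [add_sub_cancel_right, HahnSeries.coeff_zero, zero_add] at this
      rw [this]
      by_cases h1 : n = 1
      · subst h1
        simp [hddm]
      · rw [HahnSeries.coeff_single_of_ne (show n - 1 - -1 ≠ 0 by omega),
          HahnSeries.coeff_single_of_ne (show n - 1 ≠ 0 by omega)]
        simp
  induction n with
  | zero =>
    intro x hx β hβ h
    obtain ⟨y, hy, γ, hγ, -, rfl⟩ := step x hx β hβ h
    rw [coeff_shiftBy]
    exact psSpan_le B hBpos hy _ (by simp)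
  | succ n ih =>
    intro x hx β hβ h
    obtain ⟨y, hy, γ, hγ, h', rfl⟩ := step x hx β hβ h
    rw [coeff_shiftBy]
    have := ih y hy γ hγ h'
    simpa using this

lemma key_span (d : N →ₗ[ℂ] T) (w : N →ₗ[ℂ] T)
    (B : Submodule ℂ (HahnSeries ℤ T)) (hBpos : B ≤ posSub T)
    [FiniteDimensional ℂ B]
    (hsurj : Function.Surjective
      ⇑((LinearMap.range w).mkQ.comp ((evCoeff T 0).comp B.subtype)))
    (t : HahnSeries ℤ T) (ht : t ∈ posSub T) :
    ∃ x ∈ psSpan B hBpos, ∃ β ∈ posSub N, t = x + twD d w β := by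
  have step : ∀ t : posSub T, ∃ (b : B) (c : N) (s : posSub T),
      (t : HahnSeries ℤ T) = b + twD d w (HahnSeries.single 0 c) + shiftBy T 1 s := by
    intro t
    obtain ⟨b, hb⟩ := hsurj ((LinearMap.range w).mkQ ((t : HahnSeries ℤ T).coeff 0))
    have hb' : (LinearMap.range w).mkQ ((b : HahnSeries ℤ T).coeff 0)
      = (LinearMap.range w).mkQ ((t : HahnSeries ℤ T).coeff 0) := hb
    rw [Submodule.mkQ_apply, Submodule.mkQ_apply, eq_comm, Submodule.Quotient.eq] at hb'
    obtain ⟨c, hc⟩ := hb'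
    refine ⟨b, c, ⟨shiftBy T (-1) (t - b - twD d w (HahnSeries.single 0 c)), ?_⟩, ?_⟩
    · intro n hn
      rw [coeff_shiftBy]
      by_cases h : n = -1
      · subst h
        simp [coeff_twD, hc]
      · exact sub_mem (sub_mem t.2 (hBpos b.2)) (twD_pos d w (single_mem_pos c)) _ (by omega)
    · rw [shiftBy_shiftBy, add_neg_cancel, shiftBy_zero']
      abel
  choose b c s hs using step
  have claim : ∀ (n : ℕ) (t : posSub T), (t : HahnSeries ℤ T).coeff n =
      (seqSum (fun i => Submodule.inclusion hBpos (b (s^[i] t)))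
        + twD d w (seqSum fun i => ⟨_, single_mem_pos (c (s^[i] t))⟩)).coeff n := by
    intro n
    induction n with
    | zero =>
      intro t
      conv_lhs => rw [hs t]
      rw [seqSum_succ (X := T), seqSum_succ (X := N), map_add, twD_shift]
      simp only [HahnSeries.coeff_add, coeff_shiftBy]
      rw [(s t).2 _ (by simp), seqSum_mem _ _ (by simp), twD_pos d w (seqSum_mem _) _ (by simp)]
      simp
    | succ n ih =>
      intro t
      conv_lhs => rw [hs t]
      rw [seqSum_succ (X := T), seqSum_succ (X := N), map_add, twD_shift]
      have := ih (s t)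
      simp only [HahnSeries.coeff_add, coeff_shiftBy] at this ⊢
      rw [show ((n + 1 : ℕ) : ℤ) - 1 = n by simp, this]
      simp only [Function.iterate_succ_apply, Function.iterate_zero, id, Submodule.coe_inclusion]
      abel
  refine ⟨_, seqSum_mem_psSpan B hBpos (fun i => b (s^[i] ⟨t, ht⟩)), _,
    seqSum_mem (fun i => ⟨_, single_mem_pos (c (s^[i] ⟨t, ht⟩))⟩), ?_⟩
  ext n
  rcases lt_or_ge n 0 with h | h
  · rw [ht n h, HahnSeries.coeff_add, seqSum_mem _ n h, twD_pos d w (seqSum_mem _) n h, add_zero]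
  · obtain ⟨m, rfl⟩ := Int.eq_ofNat_of_zero_le h
    exact claim m ⟨t, ht⟩

end key


/-- Let `d' : M → N`, `d : N → T`, `w' : M → N`, `w : N → T` be
ℂ-linear maps with `d∘d' = 0`, `d∘w' = −w∘d'` and `ker w ⊆ im w'` (de Rham lemma),
and let `B̂ ⊆ T[[z]]` be a finite-dimensional subspace mapping isomorphically onto
`T/w(N)` under the constant-term map.  With `D_f(β) = z·d(β) + w(β)` on `N((z))`,
one has, for every `k ∈ ℤ`, the internal direct sum
`z⁻ᵏT[[z]] = z⁻ᵏB̂[[z]] ⊕ D_f(z⁻ᵏN[[z]])`, and consequently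
`T((z)) = B̂((z)) ⊕ D_f(N((z)))`. -/
theorem birkhoff_splitting
    (M N T : Type*) [AddCommGroup M] [Module ℂ M] [AddCommGroup N] [Module ℂ N]
    [AddCommGroup T] [Module ℂ T]
    (d' : M →ₗ[ℂ] N) (d : N →ₗ[ℂ] T) (w' : M →ₗ[ℂ] N) (w : N →ₗ[ℂ] T)
    (hdd' : d.comp d' = 0)
    (hdw' : d.comp w' = -(w.comp d'))
    (hker : LinearMap.ker w ≤ LinearMap.range w')
    (B : Submodule ℂ (HahnSeries ℤ T)) (hBpos : B ≤ posSub T)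
    [FiniteDimensional ℂ B]
    (hBiso : Function.Bijective
      ⇑((LinearMap.range w).mkQ.comp ((evCoeff T 0).comp B.subtype))) :
    -- the twisted differential `D_f = z·d + w` on `N((z))`
    let Df : HahnSeries ℤ N →ₗ[ℂ] HahnSeries ℤ T :=
      (shiftBy T 1).comp (coeffwise d) + coeffwise w
    -- internal direct sum in every filter `z⁻ᵏT[[z]]`
    (∀ k : ℤ,
      Disjoint ((psSpan B hBpos).map (shiftBy T (-k)))
        (((posSub N).map (shiftBy N (-k))).map Df) ∧
      ((psSpan B hBpos).map (shiftBy T (-k))) ⊔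
        (((posSub N).map (shiftBy N (-k))).map Df)
          = (posSub T).map (shiftBy T (-k))) ∧
    -- global splitting `T((z)) = B̂((z)) ⊕ D_f(N((z)))`
    IsCompl (laurSpan B hBpos) (LinearMap.range Df) := by
  intro Df
  have hDf : Df = twD d w := rfl
  rw [hDf]
  have main : ∀ k : ℤ,
      Disjoint ((psSpan B hBpos).map (shiftBy T (-k)))
        (((posSub N).map (shiftBy N (-k))).map (twD d w)) ∧
      ((psSpan B hBpos).map (shiftBy T (-k))) ⊔
        (((posSub N).map (shiftBy N (-k))).map (twD d w))
          = (posSub T).map (shiftBy T (-k)) := by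
    intro k
    constructor
    · rw [Submodule.disjoint_def]
      rintro _ ⟨x, hx, rfl⟩ ⟨_, ⟨β, hβ, rfl⟩, h⟩
      have hx0 : x = twD d w β := by
        rw [twD_shift] at h
        have := congrArg (shiftBy T k) h
        rw [shiftBy_shiftBy, shiftBy_shiftBy, add_neg_cancel, shiftBy_zero',
          shiftBy_zero'] at this
        exact this.symm
      have : x = 0 := by
        ext n
        rcases lt_or_ge n 0 with hn | hn
        · exact psSpan_le B hBpos hx n hn
        · obtain ⟨m, rfl⟩ := Int.eq_ofNat_of_zero_le hn
          exact key_disjoint d' d w' w hdd' hdw' hker B hBpos hBiso.1 m x hx β hβ hx0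
      rw [this, map_zero]
    · apply le_antisymm
      · refine sup_le (Submodule.map_mono (psSpan_le B hBpos)) ?_
        rintro _ ⟨_, ⟨β, hβ, rfl⟩, rfl⟩
        rw [twD_shift]
        exact ⟨_, twD_pos d w hβ, rfl⟩
      · rintro _ ⟨t, ht, rfl⟩
        obtain ⟨x, hx, β, hβ, rfl⟩ := key_span d w B hBpos hBiso.2 t ht
        rw [map_add, ← twD_shift]
        exact Submodule.add_mem_sup ⟨x, hx, rfl⟩ ⟨_, ⟨β, hβ, rfl⟩, rfl⟩
  refine ⟨main, ?_, ?_⟩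
  · rw [Submodule.disjoint_def]
    rintro x hx ⟨β, rfl⟩
    have hdir : Directed (· ≤ ·)
        (fun j : ℕ => (psSpan B hBpos).map (shiftBy T (-(j : ℤ)))) :=
      Monotone.directed_le fun j k h => psSpan_shift_mono B hBpos h
    obtain ⟨j, hj⟩ := (Submodule.mem_iSup_of_directed _ hdir).1 hx
    obtain ⟨k, hk⟩ := exists_mem_shift_pos β
    refine Submodule.disjoint_def.1 (main ((max j k : ℕ) : ℤ)).1 _
      (psSpan_shift_mono B hBpos (le_max_left j k) hj) ⟨β, ?_, rfl⟩
    refine (mem_shift_pos _ β).2 fun n hn => hk n ?_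
    have := le_max_right j k
    omega
  · rw [codisjoint_iff_le_sup]
    intro t _
    obtain ⟨k, hk⟩ := exists_mem_shift_pos t
    have ht := (mem_shift_pos _ t).2 hk
    rw [← (main k).2] at ht
    refine SetLike.le_def.1 (sup_le_sup ?_ ?_) ht
    · exact le_iSup (fun j : ℕ => (psSpan B hBpos).map (shiftBy T (-(j : ℤ)))) k
    · exact LinearMap.map_le_range


end
end

section
/- Assume ∇ is torsion-free and that the relation [v₁,v₂]*v₃ = ∇_{v₁}(v₂*v₃) + v₁*∇_{v₂}v₃ − ∇_{v₂}(v₁*v₃) − v₂*∇_{v₁}v₃ holds for all v₁, v₂, v₃ ∈ D. Then the map T(u,v,w) := ∇_u(v*w) − (∇_u v)*w − v*(∇_u w) is A-linear in each of the three arguments and is symmetric under every permutation of (u, v, w). -/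
/-- Let `A` be a commutative ℂ-algebra, `D = Derivation ℂ A A` its
module of ℂ-linear derivations, `∇` a torsion-free connection on `D` and `*` an
`A`-bilinear commutative associative multiplication satisfying
`[v₁,v₂]*v₃ = ∇_{v₁}(v₂*v₃) + v₁*∇_{v₂}v₃ − ∇_{v₂}(v₁*v₃) − v₂*∇_{v₁}v₃`.
Then `T(u,v,w) := ∇_u(v*w) − (∇_u v)*w − v*(∇_u w)` is `A`-trilinear and totally
symmetric. -/
theorem symmetric_tensor
    {A : Type*} [CommRing A] [Algebra ℂ A]
    (nabla : Derivation ℂ A A → Derivation ℂ A A → Derivation ℂ A A)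
    -- `∇` is a connection: `A`-linear in the first argument,
    -- additive and Leibniz in the second argument
    (hnabla_addl : ∀ v v' w, nabla (v + v') w = nabla v w + nabla v' w)
    (hnabla_smull : ∀ (a : A) (v w), nabla (a • v) w = a • nabla v w)
    (hnabla_addr : ∀ v w w', nabla v (w + w') = nabla v w + nabla v w')
    (hnabla_leib : ∀ (v) (a : A) (w), nabla v (a • w) = v a • w + a • nabla v w)
    -- `∇` is torsion-free
    (htf : ∀ v w, nabla v w - nabla w v = ⁅v, w⁆)
    -- `*` is an `A`-bilinear commutative associative multiplication
    (mul : Derivation ℂ A A → Derivation ℂ A A → Derivation ℂ A A)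
    (hmul_addl : ∀ u v w, mul (u + v) w = mul u w + mul v w)
    (hmul_smull : ∀ (a : A) (u w), mul (a • u) w = a • mul u w)
    (hmul_comm : ∀ u v, mul u v = mul v u)
    (hmul_assoc : ∀ u v w, mul (mul u v) w = mul u (mul v w))
    -- the compatibility relation
    (hrel : ∀ v₁ v₂ v₃, mul ⁅v₁, v₂⁆ v₃ =
      nabla v₁ (mul v₂ v₃) + mul v₁ (nabla v₂ v₃)
        - nabla v₂ (mul v₁ v₃) - mul v₂ (nabla v₁ v₃)) :
    -- conclusion about `T(u,v,w) = ∇_u(v*w) − (∇_u v)*w − v*(∇_u w)`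
    let T : Derivation ℂ A A → Derivation ℂ A A → Derivation ℂ A A → Derivation ℂ A A :=
      fun u v w => nabla u (mul v w) - mul (nabla u v) w - mul v (nabla u w)
    -- `A`-linearity in each of the three arguments
    (∀ u u' v w, T (u + u') v w = T u v w + T u' v w) ∧
    (∀ (a : A) (u v w), T (a • u) v w = a • T u v w) ∧
    (∀ u v v' w, T u (v + v') w = T u v w + T u v' w) ∧
    (∀ (a : A) (u v w), T u (a • v) w = a • T u v w) ∧
    (∀ u v w w', T u v (w + w') = T u v w + T u v w') ∧
    (∀ (a : A) (u v w), T u v (a • w) = a • T u v w) ∧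
    -- symmetry under every permutation of `(u, v, w)`
    (∀ u v w, T u v w = T v u w) ∧
    (∀ u v w, T u v w = T u w v) ∧
    (∀ u v w, T u v w = T w v u) := by
  intro T
  have mr : ∀ u v w, mul u (v + w) = mul u v + mul u w := fun u v w => by
    rw [hmul_comm, hmul_addl, hmul_comm v, hmul_comm w]
  have ms : ∀ (a : A) (u w), mul u (a • w) = a • mul u w := fun a u w => by
    rw [hmul_comm, hmul_smull, hmul_comm w]
  have s23 : ∀ u v w, T u v w = T u w v := fun u v w => by
    simp only [T]
    rw [hmul_comm v w, hmul_comm (nabla u v) w, hmul_comm v (nabla u w)]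
    abel
  have s12 : ∀ u v w, T u v w = T v u w := fun u v w => by
    have h := hrel u v w
    have h2 : mul (nabla u v) w = mul ⁅u, v⁆ w + mul (nabla v u) w := by
      rw [← hmul_addl, ← htf]; congr 1; abel
    simp only [T]
    rw [h2, h]
    abel
  have a2 : ∀ u v v' w, T u (v + v') w = T u v w + T u v' w := fun u v v' w => by
    simp only [T, hmul_addl, hnabla_addr]
    abel
  have m2 : ∀ (a : A) (u v w), T u (a • v) w = a • T u v w := fun a u v w => by
    simp only [T, hmul_addl, hmul_smull, hnabla_leib, smul_sub]
    abel
  refine ⟨?_, ?_, a2, m2, ?_, ?_, s12, s23, ?_⟩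
  · intro u u' v w
    rw [s12, a2, s12 v u, s12 v u']
  · intro a u v w
    rw [s12, m2, s12 v u]
  · intro u v w w'
    rw [s23, a2, s23 u w, s23 u w']
  · intro a u v w
    rw [s23, m2, s23 u w]
  · intro u v w
    rw [s23, s12, s23]
end

section
/- Assume ∇ is torsion-free, the relation [v₁,v₂]*v₃ = ∇_{v₁}(v₂*v₃) + v₁*∇_{v₂}v₃ − ∇_{v₂}(v₁*v₃) − v₂*∇_{v₁}v₃ holds for all v₁, v₂, v₃ ∈ D, and E ∈ D satisfies ∇_{v*w}E − v*∇_w E + E*∇_v w + v*w = ∇_v(E*w) for all v, w ∈ D. Then the Euler homogeneity of the product holds: [E, v*w] = v*[E,w] + [E,v]*w + v*w for all v, w ∈ D. -/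
/-- Let `A` be a commutative ℂ-algebra, `D = Derivation ℂ A A`, `∇`
a torsion-free connection on `D` and `*` an `A`-bilinear commutative associative
multiplication satisfying
`[v₁,v₂]*v₃ = ∇_{v₁}(v₂*v₃) + v₁*∇_{v₂}v₃ − ∇_{v₂}(v₁*v₃) − v₂*∇_{v₁}v₃`, and let
`E ∈ D` satisfy `∇_{v*w}E − v*∇_w E + E*∇_v w + v*w = ∇_v(E*w)` for all `v, w`.
Then the Euler homogeneity `[E, v*w] = v*[E,w] + [E,v]*w + v*w` holds. -/
theorem euler_homogeneity
    {A : Type*} [CommRing A] [Algebra ℂ A]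
    (nabla : Derivation ℂ A A → Derivation ℂ A A → Derivation ℂ A A)
    (hnabla_addl : ∀ v v' w, nabla (v + v') w = nabla v w + nabla v' w)
    (hnabla_smull : ∀ (a : A) (v w), nabla (a • v) w = a • nabla v w)
    (hnabla_addr : ∀ v w w', nabla v (w + w') = nabla v w + nabla v w')
    (hnabla_leib : ∀ (v) (a : A) (w), nabla v (a • w) = v a • w + a • nabla v w)
    (htf : ∀ v w, nabla v w - nabla w v = ⁅v, w⁆)
    (mul : Derivation ℂ A A → Derivation ℂ A A → Derivation ℂ A A)
    (hmul_addl : ∀ u v w, mul (u + v) w = mul u w + mul v w)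
    (hmul_smull : ∀ (a : A) (u w), mul (a • u) w = a • mul u w)
    (hmul_comm : ∀ u v, mul u v = mul v u)
    (hmul_assoc : ∀ u v w, mul (mul u v) w = mul u (mul v w))
    (hrel : ∀ v₁ v₂ v₃, mul ⁅v₁, v₂⁆ v₃ =
      nabla v₁ (mul v₂ v₃) + mul v₁ (nabla v₂ v₃)
        - nabla v₂ (mul v₁ v₃) - mul v₂ (nabla v₁ v₃))
    (E : Derivation ℂ A A)
    (hE : ∀ v w, nabla (mul v w) E - mul v (nabla w E) + mul E (nabla v w) + mul v w
      = nabla v (mul E w)) :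
    ∀ v w, ⁅E, mul v w⁆ = mul v ⁅E, w⁆ + mul ⁅E, v⁆ w + mul v w := by
  intro v w
  have hadd : ∀ x y, mul v (x + y) = mul v x + mul v y := by
    intro x y
    rw [hmul_comm v (x + y), hmul_addl, hmul_comm x v, hmul_comm y v]
  have h1 : mul v (nabla E w) = mul v ⁅E, w⁆ + mul v (nabla w E) := by
    rw [← hadd, ← htf, sub_add_cancel]
  rw [hrel E v w, ← hE v w, h1, ← htf E (mul v w)]
  abel
end

section
/- Assume ∇ is torsion-free and flat, and that the relation [v₁,v₂]*v₃ = ∇_{v₁}(v₂*v₃) + v₁*∇_{v₂}v₃ − ∇_{v₂}(v₁*v₃) − v₂*∇_{v₁}v₃ holds for all v₁, v₂, v₃ ∈ D. Then for every λ ∈ ℂ the connection ∇^λ defined by ∇^λ_v w := ∇_v w − λ·(v*w) is again torsion-free and flat. -/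
/-- Let `A` be a commutative ℂ-algebra, `D = Derivation ℂ A A`, `∇`
a torsion-free flat connection on `D` and `*` an `A`-bilinear commutative
associative multiplication satisfying
`[v₁,v₂]*v₃ = ∇_{v₁}(v₂*v₃) + v₁*∇_{v₂}v₃ − ∇_{v₂}(v₁*v₃) − v₂*∇_{v₁}v₃`.
Then for every `λ ∈ ℂ` the connection `∇^λ_v w = ∇_v w − λ·(v*w)` is again
torsion-free and flat. -/
theorem pencil_flat
    {A : Type*} [CommRing A] [Algebra ℂ A]
    (nabla : Derivation ℂ A A → Derivation ℂ A A → Derivation ℂ A A)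
    (hnabla_addl : ∀ v v' w, nabla (v + v') w = nabla v w + nabla v' w)
    (hnabla_smull : ∀ (a : A) (v w), nabla (a • v) w = a • nabla v w)
    (hnabla_addr : ∀ v w w', nabla v (w + w') = nabla v w + nabla v w')
    (hnabla_leib : ∀ (v) (a : A) (w), nabla v (a • w) = v a • w + a • nabla v w)
    (htf : ∀ v w, nabla v w - nabla w v = ⁅v, w⁆)
    (hflat : ∀ u v w, nabla v (nabla w u) - nabla w (nabla v u) = nabla ⁅v, w⁆ u)
    (mul : Derivation ℂ A A → Derivation ℂ A A → Derivation ℂ A A)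
    (hmul_addl : ∀ u v w, mul (u + v) w = mul u w + mul v w)
    (hmul_smull : ∀ (a : A) (u w), mul (a • u) w = a • mul u w)
    (hmul_comm : ∀ u v, mul u v = mul v u)
    (hmul_assoc : ∀ u v w, mul (mul u v) w = mul u (mul v w))
    (hrel : ∀ v₁ v₂ v₃, mul ⁅v₁, v₂⁆ v₃ =
      nabla v₁ (mul v₂ v₃) + mul v₁ (nabla v₂ v₃)
        - nabla v₂ (mul v₁ v₃) - mul v₂ (nabla v₁ v₃)) :
    ∀ lam : ℂ,
      let nablaLam : Derivation ℂ A A → Derivation ℂ A A → Derivation ℂ A A :=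
        fun v w => nabla v w - lam • mul v w
      (∀ v w, nablaLam v w - nablaLam w v = ⁅v, w⁆) ∧
      (∀ u v w, nablaLam v (nablaLam w u) - nablaLam w (nablaLam v u)
        = nablaLam ⁅v, w⁆ u) := by
  intro lam nablaLam
  have hs : ∀ (c : ℂ) (x : Derivation ℂ A A), c • x = algebraMap ℂ A c • x := by
    intro c x
    ext a
    simp [Algebra.smul_def]
  have hN : ∀ v w, nabla v (lam • w) = lam • nabla v w := by
    intro v w
    rw [hs, hnabla_leib, hs lam (nabla v w)]
    simp
  have hNsub : ∀ v x y, nabla v (x - y) = nabla v x - nabla v y := by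
    intro v x y
    rw [eq_sub_iff_add_eq, ← hnabla_addr, sub_add_cancel]
  have hM : ∀ v w, mul v (lam • w) = lam • mul v w := by
    intro v w
    rw [hs, hmul_comm, hmul_smull, hmul_comm w v, hs lam (mul v w)]
  have hMsub : ∀ v x y, mul v (x - y) = mul v x - mul v y := by
    intro v x y
    rw [eq_sub_iff_add_eq, hmul_comm v (x - y), hmul_comm v y, ← hmul_addl, sub_add_cancel,
      hmul_comm]
  refine ⟨fun v w => ?_, fun u v w => ?_⟩
  · simp only [nablaLam]
    rw [hmul_comm w v, ← htf v w]
    abel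
  · simp only [nablaLam]
    have hc : mul v (mul w u) = mul w (mul v u) := by
      rw [← hmul_assoc, hmul_comm v w, hmul_assoc]
    rw [hNsub, hNsub, hMsub, hMsub, hN, hN, hM, hM, hc, hrel v w u, ← hflat u v w]
    simp only [smul_sub, smul_add]
    abel
end

section
/- Assume ∇ is torsion-free, * is an A-bilinear commutative product on D satisfying [v₁,v₂]*v₃ = ∇_{v₁}(v₂*v₃) + v₁*∇_{v₂}v₃ − ∇_{v₂}(v₁*v₃) − v₂*∇_{v₁}v₃ for all v₁, v₂, v₃ ∈ D, and η : D × D → A is a symmetric A-bilinear form that is ∇-horizontal (v(η(u,w)) = η(∇_v u, w) + η(u, ∇_v w) for all u, v, w) and for which * is self-adjoint (η(u*v, w) = η(u, v*w) for all u, v, w). Call u ∈ D flat if ∇_y u = 0 for all y ∈ D. Then for all flat u, v, w, x ∈ D the element x(η(u*v, w)) ∈ A is invariant under every permutation of the four fields (x, u, v, w). (This is the symmetry of the 4-tensor guaranteeing the local solvability of the potential equation u v w F = η(u*v, w).) -/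
/-- Let `A` be a commutative ℂ-algebra, `D = Derivation ℂ A A`,
`∇` a torsion-free connection on `D`, `*` an `A`-bilinear commutative product
satisfying `[v₁,v₂]*v₃ = ∇_{v₁}(v₂*v₃) + v₁*∇_{v₂}v₃ − ∇_{v₂}(v₁*v₃) − v₂*∇_{v₁}v₃`,
and `η` a symmetric `A`-bilinear form which is `∇`-horizontal and for which `*` is
self-adjoint.  Then for all `∇`-flat `u, v, w, x ∈ D` the element
`x(η(u*v, w)) ∈ A` is invariant under every permutation of `(x, u, v, w)`. -/
theorem potential_four_tensor_symmetry
    {A : Type*} [CommRing A] [Algebra ℂ A]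
    (nabla : Derivation ℂ A A → Derivation ℂ A A → Derivation ℂ A A)
    (hnabla_addl : ∀ v v' w, nabla (v + v') w = nabla v w + nabla v' w)
    (hnabla_smull : ∀ (a : A) (v w), nabla (a • v) w = a • nabla v w)
    (hnabla_addr : ∀ v w w', nabla v (w + w') = nabla v w + nabla v w')
    (hnabla_leib : ∀ (v) (a : A) (w), nabla v (a • w) = v a • w + a • nabla v w)
    (htf : ∀ v w, nabla v w - nabla w v = ⁅v, w⁆)
    (mul : Derivation ℂ A A → Derivation ℂ A A → Derivation ℂ A A)
    (hmul_addl : ∀ u v w, mul (u + v) w = mul u w + mul v w)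
    (hmul_smull : ∀ (a : A) (u w), mul (a • u) w = a • mul u w)
    (hmul_comm : ∀ u v, mul u v = mul v u)
    (hrel : ∀ v₁ v₂ v₃, mul ⁅v₁, v₂⁆ v₃ =
      nabla v₁ (mul v₂ v₃) + mul v₁ (nabla v₂ v₃)
        - nabla v₂ (mul v₁ v₃) - mul v₂ (nabla v₁ v₃))
    (eta : Derivation ℂ A A → Derivation ℂ A A → A)
    (heta_addl : ∀ u u' w, eta (u + u') w = eta u w + eta u' w)
    (heta_smull : ∀ (a : A) (u w), eta (a • u) w = a * eta u w)
    (heta_symm : ∀ u w, eta u w = eta w u)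
    -- η is ∇-horizontal
    (heta_hor : ∀ v u w, v (eta u w) = eta (nabla v u) w + eta u (nabla v w))
    -- `*` is self-adjoint with respect to η
    (heta_sa : ∀ u v w, eta (mul u v) w = eta u (mul v w)) :
    ∀ u v w x : Derivation ℂ A A,
      (∀ y, nabla y u = 0) → (∀ y, nabla y v = 0) →
      (∀ y, nabla y w = 0) → (∀ y, nabla y x = 0) →
      (x (eta (mul u v) w) = u (eta (mul x v) w) ∧
       x (eta (mul u v) w) = x (eta (mul v u) w) ∧
       x (eta (mul u v) w) = x (eta (mul u w) v)) := by
  intro u v w x hu hv hw hx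
  have m0l : ∀ z, mul 0 z = 0 := fun z => by
    have h := hmul_smull 0 0 z
    rwa [zero_smul, zero_smul] at h
  have m0r : ∀ z, mul z 0 = 0 := fun z => by rw [hmul_comm, m0l]
  have e0r : ∀ z, eta z 0 = 0 := fun z => by
    have h := heta_smull 0 0 z
    rw [zero_smul, zero_mul] at h
    rw [heta_symm, h]
  have hb : ⁅x, u⁆ = 0 := by rw [← htf, hu, hx, sub_zero]
  have key : nabla x (mul u v) = nabla u (mul x v) := by
    have h := hrel x u v
    rw [hb, m0l, hv, hv, m0r, m0r, add_zero, sub_zero] at h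
    exact sub_eq_zero.mp h.symm
  refine ⟨?_, ?_, ?_⟩
  · rw [heta_hor, heta_hor, hw, hw, e0r, e0r, key]
  · rw [hmul_comm]
  · rw [hmul_comm u v, heta_sa, heta_symm]
end
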